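/- arXiv:2104.05455 — 3 statements merged into one kernel-verified Lean document; each statement's English description precedes it below -/
import Mathlib

section
/- Let K be a Hilbertian field, r, s ≥ 1, and let P_1,…,P_l ∈ K[T,Y] (T an r-tuple and Y an s-tuple of variables) be polynomials such that the ideal p̃_T = ⟨P_1,…,P_l⟩ of K(T)[Y] is prime and the field extension Frac(K(T)[Y]/p̃_T) of K(T) is separable. Let d be the Krull dimension of K(T)[Y]/p̃_T. Then the set of t ∈ K^r such that the specialized ideal p_t = ⟨P_1(t,Y),…,P_l(t,Y)⟩ of K[Y] is prime and K[Y]/p_t has Krull dimension d is Zariski-dense in K^r. -/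
open MvPolynomial

noncomputable section

/-- The rational function field `K(T)` with variables indexed by `ι`,
realized as the fraction field of the polynomial ring. -/
abbrev RatFuncField (K : Type) [Field K] (ι : Type) : Type := FractionRing (MvPolynomial ι K)

/-- `x ∈ K(T)` can be specialized at `t ∈ K^ι` with value `v`:
there is a representation `x = a/b` with `b(t) ≠ 0` and `v = a(t)/b(t)`. -/
def RatSpecializesTo (K : Type) [Field K] {ι : Type} (t : ι → K)
    (x : RatFuncField K ι) (v : K) : Prop :=
  ∃ a b : MvPolynomial ι K, MvPolynomial.eval t b ≠ 0 ∧
    algebraMap (MvPolynomial ι K) (RatFuncField K ι) b * x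
      = algebraMap (MvPolynomial ι K) (RatFuncField K ι) a ∧
    MvPolynomial.eval t b * v = MvPolynomial.eval t a

/-- `P ∈ K(T)[Y]` specializes at `t` (coefficientwise) to `q ∈ K[Y]`. -/
def PolySpecializesTo (K : Type) [Field K] {ι : Type} {s : ℕ} (t : ι → K)
    (P : MvPolynomial (Fin s) (RatFuncField K ι)) (q : MvPolynomial (Fin s) K) : Prop :=
  ∀ mono : Fin s →₀ ℕ, RatSpecializesTo K t (P.coeff mono) (q.coeff mono)

/-- `H` is a Hilbert subset of `K^ι`: the set of points where finitely many irreducible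
polynomials of `K(T)[Y]` specialize to irreducible polynomials of `K[Y]`, intersected
with a nonempty Zariski-open subset. -/
def IsHilbertSubset (K : Type) [Field K] (ι : Type) (H : Set (ι → K)) : Prop :=
  ∃ (s l n : ℕ) (p : Fin l → MvPolynomial (Fin s) (RatFuncField K ι))
    (g : Fin n → MvPolynomial ι K),
    (∀ i, Irreducible (p i)) ∧
    (∃ t : ι → K, ∃ j, MvPolynomial.eval t (g j) ≠ 0) ∧
    H = {t | (∃ j, MvPolynomial.eval t (g j) ≠ 0) ∧
      ∀ i, ∃ q : MvPolynomial (Fin s) K, PolySpecializesTo K t (p i) q ∧ Irreducible q}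

/-- A subset of `K^ι` is Zariski-dense iff for every nonzero polynomial `g` it contains a
point where `g` does not vanish. -/
def IsZariskiDense (K : Type) [Field K] {ι : Type} (S : Set (ι → K)) : Prop :=
  ∀ g : MvPolynomial ι K, g ≠ 0 → ∃ t ∈ S, MvPolynomial.eval t g ≠ 0

/-- A field is Hilbertian if all its Hilbert subsets (of all `K^r`, `r ≥ 1`) are
Zariski-dense. -/
def IsHilbertianField (K : Type) [Field K] : Prop :=
  ∀ r : ℕ, 0 < r → ∀ H : Set (Fin r → K), IsHilbertSubset K (Fin r) H → IsZariskiDense K H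

/-- The canonical ring homomorphism `K[T,Y] → K(T)[Y]`. -/
def extHom (K : Type) [Field K] (r s : ℕ) :
    MvPolynomial (Fin r ⊕ Fin s) K →+* MvPolynomial (Fin s) (RatFuncField K (Fin r)) :=
  MvPolynomial.eval₂Hom
    ((MvPolynomial.C).comp
      ((algebraMap (MvPolynomial (Fin r) K) (RatFuncField K (Fin r))).comp MvPolynomial.C))
    (Sum.elim
      (fun i => MvPolynomial.C
        (algebraMap (MvPolynomial (Fin r) K) (RatFuncField K (Fin r)) (MvPolynomial.X i)))
      (fun j => MvPolynomial.X j))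

/-- The specialization homomorphism `K[T,Y] → K[Y]`, `T ↦ t`. -/
def specHom (K : Type) [Field K] {r s : ℕ} (t : Fin r → K) :
    MvPolynomial (Fin r ⊕ Fin s) K →+* MvPolynomial (Fin s) K :=
  MvPolynomial.eval₂Hom MvPolynomial.C
    (Sum.elim (fun i => MvPolynomial.C (t i)) (fun j => MvPolynomial.X j))

/-- `L` is a separable extension of `F` in the general sense (equivalently, `L` is
linearly disjoint from the perfect closure of `F`, equivalently `L ⊗_F F̄` is reduced);
the extension is given by the ring homomorphism `f : F → L`. -/
def IsSepExtOfHom (F L : Type) [Field F] [CommRing L] (f : F →+* L) : Prop :=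
  letI : Algebra F L := f.toAlgebra
  IsReduced (TensorProduct F (AlgebraicClosure F) L)

/-- `Frac(A)` is a separable extension of `F` in the general sense. -/
def IsSepOverBase (F : Type) [Field F] (A : Type) [CommRing A] [Algebra F A] : Prop :=
  IsSepExtOfHom F (FractionRing A) ((algebraMap A (FractionRing A)).comp (algebraMap F A))

/-- The height of an ideal: the infimum over primes containing it of the lengths of
chains of primes below.  For a prime ideal this is the usual height. -/
def idealHeight {R : Type} [CommRing R] (I : Ideal R) : ℕ∞ :=
  ⨅ p : {q : PrimeSpectrum R // I ≤ q.asIdeal}, Order.height p.1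

/-- The monomials in `s` variables of total degree at most `D`. -/
def MonLE (s D : ℕ) : Type := {m : Fin s →₀ ℕ // m.degree ≤ D}

noncomputable instance (s D : ℕ) : Fintype (MonLE s D) :=
  (Finsupp.finite_of_degree_le D).fintype

/-- The generic polynomial of degree `D`, with parameter variables `v m`, `m` a monomial of
degree at most `D`, as an element of `K[Λ][Y]`. -/
def genPoly (K : Type) [Field K] (s D : ℕ) {Λ : Type} (v : MonLE s D → Λ) :
    MvPolynomial (Fin s) (MvPolynomial Λ K) :=
  ∑ m : MonLE s D, MvPolynomial.monomial m.1 (MvPolynomial.X (v m))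

/-- The generic polynomial of degree `D` specialized at `lam ∈ K^{N_D}`. -/
def genPolyAt (K : Type) [Field K] (s D : ℕ) (lam : MonLE s D → K) :
    MvPolynomial (Fin s) K :=
  ∑ m : MonLE s D, MvPolynomial.monomial m.1 (lam m)

/-- Substitution `T_i ↦ U_i(Y)` as a ring homomorphism `K[T,Y] → K[Y]`. -/
def polySubstHom (K : Type) [Field K] {r s : ℕ} (U : Fin r → MvPolynomial (Fin s) K) :
    MvPolynomial (Fin r ⊕ Fin s) K →+* MvPolynomial (Fin s) K :=
  MvPolynomial.eval₂Hom MvPolynomial.C (Sum.elim U (fun j => MvPolynomial.X j))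

/-- The quasi-generic polynomial `Q_{S,R}(Λ,Y) = ∑_i Λ_i Q_i(Y) + R(Y)` of base `(S,R)`,
where `S = {monomial (m 0), …, monomial (m n)}`, as an element of `K[Λ][Y]`. -/
def quasiGen (K : Type) [Field K] {s n : ℕ} (m : Fin (n + 1) → (Fin s →₀ ℕ))
    (R : MvPolynomial (Fin s) K) :
    MvPolynomial (Fin s) (MvPolynomial (Fin (n + 1)) K) :=
  (∑ i, MvPolynomial.monomial (m i) (MvPolynomial.X i)) +
    MvPolynomial.map (MvPolynomial.C) R

/-- Hypothesis (H) for the triple `(p, S, R)` (with `S` the set of monomials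
`monomial (m i)`, `m 0 = 0`): the map `φ_{S,R}` sending `(a_1,…,a_n)` to the class mod `E`
of `∑_{i ≥ 1} a_i Q_i(Y) + R(Y)` in `B/E` is not identically zero, where `B = K[Y]/p` and
`E ⊆ B` is the subfield of elements algebraic over `K`. -/
def HypothesisH (K : Type) [Field K] {s n : ℕ} (p : Ideal (MvPolynomial (Fin s) K))
    (m : Fin (n + 1) → (Fin s →₀ ℕ)) (R : MvPolynomial (Fin s) K) : Prop :=
  ∃ a : Fin (n + 1) → K,
    Ideal.Quotient.mk p ((∑ i ∈ Finset.univ.erase 0, MvPolynomial.monomial (m i) (a i)) + R)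
      ∉ integralClosure K (MvPolynomial (Fin s) K ⧸ p)

open scoped TensorProduct

/-!
The fibre of the family over a field-valued point `k` of `Spec K[T]` is `k ⊗ B` for a
`K[T]`-algebra `B` of finite type whose fraction field is `L = Frac (K(T)[Y]/p)`. By generic
freeness, a nonzero element of `B` stays a nonzerodivisor in the fibres over a nonempty open
subset, so that inverting it affects neither their integrality nor their transcendence degree.
Hence these two properties depend, over a nonempty open subset, only on `L`. As `L` is separable
over `K(T)`, the primitive element theorem makes it the function field of a hypersurface `f = 0`,
whose fibre at `t` is integral of the right dimension as soon as `f(t, Y)` is irreducible. The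
Hilbert property provides such `t`.
-/

universe u v w

section GenericFreeness

variable {σ R : Type*} [CommRing R]

/-- The exponents `a` such that `X ^ a` is the leading monomial of a nonzero element of `J`. The
leading coefficients need not be units, so `J` need not contain a monic polynomial of degree `a`. -/
def leadingExponents (m : MonomialOrder σ) (J : Ideal (MvPolynomial σ R)) : Set (σ →₀ ℕ) :=
  {a | ∃ h ∈ J, h ≠ 0 ∧ m.degree h = a}

theorem linearIndependent_monomial_notMem_leadingExponents {B : Type*} [CommRing B] [Algebra R B]
    (m : MonomialOrder σ) (φ : MvPolynomial σ R →ₐ[R] B) :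
    LinearIndependent R fun a : ↥(leadingExponents m (RingHom.ker φ))ᶜ => φ (monomial a 1) := by
  classical
  refine linearIndependent_iff'.2 fun s c hc i hi => ?_
  set h : MvPolynomial σ R := ∑ j ∈ s, monomial (j : σ →₀ ℕ) (c j) with h_def
  have h_mem : h ∈ RingHom.ker φ := by
    rw [RingHom.mem_ker, h_def, map_sum, ← hc]
    exact Finset.sum_congr rfl fun j _ => by rw [← map_smul, smul_monomial, smul_eq_mul, mul_one]
  have coeff_h (b : σ →₀ ℕ) : coeff b h = ∑ j ∈ s, if (j : σ →₀ ℕ) = b then c j else 0 := by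
    simp only [h_def, coeff_sum, coeff_monomial]
  have h_zero : h = 0 := by
    by_contra h_ne
    obtain ⟨j, -, hj⟩ := Finset.exists_ne_zero_of_sum_ne_zero
      ((coeff_h _).symm.trans_ne (m.leadingCoeff_ne_zero_iff.2 h_ne))
    have hj_deg : (j : σ →₀ ℕ) = m.degree h := by_contra fun hne => hj (if_neg hne)
    exact j.2 ⟨h, h_mem, h_ne, hj_deg.symm⟩
  simpa [h_zero, Subtype.coe_inj, hi] using (coeff_h i).symm

theorem exists_leadingCoeff_dvd [IsDomain R] [Finite σ] (m : MonomialOrder σ)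
    (J : Ideal (MvPolynomial σ R)) :
    ∃ g : R, g ≠ 0 ∧ ∀ a ∈ leadingExponents m J,
      ∃ h ∈ J, m.degree h = a ∧ m.leadingCoeff h ∣ g := by
  classical
  have hfin : {a | Minimal (· ∈ leadingExponents m J) a}.Finite :=
    WellQuasiOrderedLE.finite_of_isAntichain (setOfPred_minimal_antichain _)
  have hmin (a) (ha : a ∈ hfin.toFinset) : ∃ h ∈ J, h ≠ 0 ∧ m.degree h = a :=
    (hfin.mem_toFinset.1 ha).prop
  choose! h hJ hne hdeg using hmin
  refine ⟨∏ a ∈ hfin.toFinset, m.leadingCoeff (h a), Finset.prod_ne_zero_iff.2 fun a ha =>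
    m.leadingCoeff_ne_zero_iff.2 (hne a ha), fun a ha => ?_⟩
  obtain ⟨b, hba, hb⟩ := exists_minimal_le_of_wellFoundedLT (· ∈ leadingExponents m J) a ha
  have hb' : b ∈ hfin.toFinset := hfin.mem_toFinset.2 hb
  have hX : monomial (a - b) (1 : R) ≠ 0 := monomial_eq_zero.not.2 one_ne_zero
  refine ⟨monomial (a - b) 1 * h b, J.mul_mem_left _ (hJ b hb'), ?_, ?_⟩
  · rw [m.degree_mul hX (hne b hb'), hdeg b hb', m.degree_monomial, if_neg one_ne_zero,
      tsub_add_cancel_of_le hba]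
  · rw [m.leadingCoeff_mul, m.leadingCoeff_monomial, one_mul]
    exact Finset.dvd_prod_of_mem _ hb'

theorem map_mem_span_monomial_notMem_leadingExponents {S N : Type*} [CommRing S] [Algebra R S]
    [AddCommGroup N] [Module R N] [Module S N] [IsScalarTower R S N] (m : MonomialOrder σ)
    {J : Ideal (MvPolynomial σ R)} {g : R} (hg : IsUnit (algebraMap R S g))
    (hJ : ∀ a ∈ leadingExponents m J, ∃ h ∈ J, m.degree h = a ∧ m.leadingCoeff h ∣ g)
    (ψ : MvPolynomial σ R →ₗ[R] N) (hψ : ∀ h ∈ J, ψ h = 0) (p : MvPolynomial σ R) :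
    ψ p ∈ Submodule.span S (Set.range fun a : ↥(leadingExponents m J)ᶜ => ψ (monomial a 1)) := by
  classical
  set W := Submodule.span S (Set.range fun a : ↥(leadingExponents m J)ᶜ => ψ (monomial a 1))
  have smul_mem {a : σ →₀ ℕ} (ha : ψ (monomial a 1) ∈ W) (c : R) : ψ (monomial a c) ∈ W := by
    have := W.smul_mem (algebraMap R S c) ha
    rwa [algebraMap_smul, ← map_smul, smul_monomial, smul_eq_mul, mul_one] at this
  have monomial_mem (a : σ →₀ ℕ) : ψ (monomial a 1) ∈ W := by
    induction a using (InvImage.wf m.toSyn wellFounded_lt).induction with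
    | _ a ih =>
    by_cases ha : a ∈ leadingExponents m J
    · obtain ⟨h, h_mem, rfl, h_dvd⟩ := hJ a ha
      have tail_mem : ψ (h - m.leadingTerm h) ∈ W := by
        rw [as_sum (h - _), map_sum]
        refine W.sum_mem fun b hb => smul_mem (ih b ?_) _
        have hb_ne : b ≠ m.degree h := by
          rintro rfl
          simp [MonomialOrder.leadingTerm, MonomialOrder.leadingCoeff, coeff_monomial] at hb
        exact ((m.le_degree hb).trans (m.degree_sub_leadingTerm_le h)).lt_of_ne
          (m.toSyn.injective.ne hb_ne)
      have head_mem : algebraMap R S (m.leadingCoeff h) • ψ (monomial (m.degree h) 1) ∈ W := by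
        rwa [map_sub, hψ h h_mem, zero_sub, W.neg_mem_iff, MonomialOrder.leadingTerm,
          ← mul_one (m.leadingCoeff h), ← smul_eq_mul, ← smul_monomial, map_smul,
          ← algebraMap_smul S] at tail_mem
      exact (W.smul_mem_iff_of_isUnit (isUnit_of_dvd_unit (map_dvd _ h_dvd) hg)).1 head_mem
    · exact Submodule.subset_span ⟨⟨a, ha⟩, rfl⟩
  rw [p.as_sum, map_sum]
  exact W.sum_mem fun a _ => smul_mem (monomial_mem a) _

/-- Grothendieck's generic freeness lemma, for an algebra instead of a module over it. -/
theorem exists_free_localizedModule_powers (R B : Type*) [CommRing R] [IsDomain R] [CommRing B]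
    [Algebra R B] [Algebra.FiniteType R B] :
    ∃ g : R, g ≠ 0 ∧ Module.Free (Localization (.powers g)) (LocalizedModule (.powers g) B) := by
  obtain ⟨n, φ, hφ⟩ := Algebra.FiniteType.iff_quotient_mvPolynomial''.1 ‹Algebra.FiniteType R B›
  let m : MonomialOrder (Fin n) := .lex
  obtain ⟨g, hg, hdvd⟩ := exists_leadingCoeff_dvd m (RingHom.ker φ)
  refine ⟨g, hg, ?_⟩
  let ι := LocalizedModule.mkLinearMap (.powers g) B
  let v (a : ↥(leadingExponents m (RingHom.ker φ))ᶜ) := φ (monomial a 1)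
  have hindep : LinearIndependent (Localization (.powers g)) (ι ∘ v) :=
    (linearIndependent_monomial_notMem_leadingExponents m φ).of_isLocalizedModule
      (Localization (.powers g)) (.powers g) ι
  refine Module.Free.of_basis (Module.Basis.mk hindep fun x _ => ?_)
  obtain ⟨⟨b, c⟩, rfl⟩ := IsLocalizedModule.mk'_surjective (.powers g) ι x
  obtain ⟨p, rfl⟩ := hφ b
  have hunit (c : Submonoid.powers g) := IsLocalization.map_units (Localization (.powers g)) c
  rw [← Submodule.smul_mem_iff_of_isUnit _ (hunit c), algebraMap_smul, ← Submonoid.smul_def,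
    Function.uncurry_apply_pair, IsLocalizedModule.mk'_cancel']
  exact map_mem_span_monomial_notMem_leadingExponents m (hunit ⟨g, Submonoid.mem_powers g⟩) hdvd
    (ι ∘ₗ φ.toLinearMap) (fun h hh => by simp [RingHom.mem_ker.1 hh]) p

end GenericFreeness

section GenericInjectivity

theorem lTensor_injective_of_exact_of_flat_localizedModule {R M N P : Type*} (A : Type*)
    [CommRing R] [AddCommGroup M] [Module R M] [AddCommGroup N] [Module R N] [AddCommGroup P]
    [Module R P] [CommRing A] [Algebra R A] (S : Submonoid R) [Module.Flat R (LocalizedModule S P)]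
    (hA : ∀ c : S, IsUnit (algebraMap R A c)) {f : M →ₗ[R] N} (hf : Function.Injective f)
    {p : N →ₗ[R] P} (hp : Function.Surjective p) (hfp : Function.Exact f p) :
    Function.Injective (f.lTensor A) := by
  let ιM := LocalizedModule.mkLinearMap S M
  let ιN := LocalizedModule.mkLinearMap S N
  let ιP := LocalizedModule.mkLinearMap S P
  have map_inj : Function.Injective ((IsLocalizedModule.map S ιM ιN f).rTensor A) :=
    (LinearMap.lTensor_inj_iff_rTensor_inj A _).1 <| LinearMap.lTensor_injective_of_exact_of_flat
      (IsLocalizedModule.map S ιN ιP p) (IsLocalizedModule.map_surjective S _ _ p hp) _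
      (IsLocalizedModule.map_injective S _ _ f hf) (IsLocalizedModule.map_exact S _ _ _ f p hfp) A
  refine (LinearMap.lTensor_inj_iff_rTensor_inj A f).2 <|
    (injective_iff_map_eq_zero _).2 fun z hz => ?_
  have square : (IsLocalizedModule.map S ιM ιN f).rTensor A ∘ₗ ιM.rTensor A =
      ιN.rTensor A ∘ₗ f.rTensor A := by
    rw [← LinearMap.rTensor_comp, ← LinearMap.rTensor_comp, IsLocalizedModule.map_comp]
  have ιz_eq_zero : ιM.rTensor A z = 0 :=
    map_inj (by simpa [hz] using LinearMap.congr_fun square z)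
  have : IsLocalizedModule S (ιM.rTensor A) :=
    inferInstanceAs (IsLocalizedModule S (TensorProduct.AlgebraTensorModule.rTensor R A ιM))
  obtain ⟨c, hc⟩ := (IsLocalizedModule.eq_zero_iff S (ιM.rTensor A)).1 ιz_eq_zero
  have hc' : algebraMap R A c • TensorProduct.comm R M A z = 0 := by
    rw [algebraMap_smul, ← map_smul, ← Submonoid.smul_def, hc, map_zero]
  exact (TensorProduct.comm R M A).map_eq_zero_iff.1 ((hA c).smul_eq_zero.1 hc')

end GenericInjectivity

/-- A property `Q` of the `R`-algebras `k` that are fields, thought of as the (not necessarily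
closed) points of `Spec R`, holds generically if it holds wherever some nonzero `g : R` does not
vanish. -/
def HoldsGenerically (R : Type u) [CommRing R]
    (Q : ∀ (k : Type w) [Field k] [Algebra R k], Prop) : Prop :=
  ∃ g : R, g ≠ 0 ∧ ∀ (k : Type w) [Field k] [Algebra R k], algebraMap R k g ≠ 0 → Q k

namespace HoldsGenerically

variable {R : Type u} [CommRing R] {Q Q' : ∀ (k : Type w) [Field k] [Algebra R k], Prop}

theorem mono (hQ : HoldsGenerically R Q)
    (hQQ' : ∀ (k : Type w) [Field k] [Algebra R k], Q k → Q' k) : HoldsGenerically R Q' := by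
  obtain ⟨g, hg, hgQ⟩ := hQ
  exact ⟨g, hg, fun k _ _ hk => hQQ' k (hgQ k hk)⟩

theorem and [IsDomain R] (hQ : HoldsGenerically R Q) (hQ' : HoldsGenerically R Q') :
    HoldsGenerically R fun k _ _ => Q k ∧ Q' k := by
  obtain ⟨g, hg, hgQ⟩ := hQ
  obtain ⟨g', hg', hgQ'⟩ := hQ'
  refine ⟨g * g', mul_ne_zero hg hg', fun k _ _ hk => ?_⟩
  rw [map_mul, mul_ne_zero_iff] at hk
  exact ⟨hgQ k hk.1, hgQ' k hk.2⟩

end HoldsGenerically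

theorem holdsGenerically_tmul_mem_nonZeroDivisors (R : Type u) {B : Type v} [CommRing R]
    [IsDomain R] [CommRing B] [Algebra R B] [Algebra.FiniteType R B] {b : B}
    (hb : b ∈ nonZeroDivisors B) :
    HoldsGenerically R fun (k : Type w) _ _ =>
      (1 : k) ⊗ₜ[R] b ∈ nonZeroDivisors (k ⊗[R] B) := by
  obtain ⟨g, hg, hfree⟩ := exists_free_localizedModule_powers R (B ⧸ Ideal.span {b})
  have : Module.Flat R (LocalizedModule (.powers g) (B ⧸ Ideal.span {b})) :=
    Module.Flat.trans R (Localization (.powers g)) _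
  refine ⟨g, hg, fun k _ _ hgk => ?_⟩
  have mulLeft_inj : Function.Injective (LinearMap.mulLeft R b) :=
    fun x y hxy => (mul_cancel_left_mem_nonZeroDivisors hb).1 hxy
  have exact_mulLeft_mk : Function.Exact (LinearMap.mulLeft R b)
      (Ideal.Quotient.mkₐ R (Ideal.span {b})).toLinearMap := fun y =>
    Ideal.Quotient.eq_zero_iff_dvd b y |>.trans <| exists_congr fun _ => eq_comm
  have lTensor_inj : Function.Injective ((LinearMap.mulLeft R b).lTensor k) :=
    lTensor_injective_of_exact_of_flat_localizedModule k (.powers g)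
      (by rintro ⟨_, n, rfl⟩; simp [hgk])
      mulLeft_inj Ideal.Quotient.mk_surjective exact_mulLeft_mk
  have lTensor_mulLeft :
      (LinearMap.mulLeft R b).lTensor k = LinearMap.mulLeft R ((1 : k) ⊗ₜ[R] b) :=
    TensorProduct.ext' fun x y => by simp
  rw [lTensor_mulLeft] at lTensor_inj
  exact mem_nonZeroDivisors_iff_right.2 fun z hz => lTensor_inj (by simpa [mul_comm] using hz)

section Birational

/-- The `k`-algebra `A` is an integral domain of transcendence degree `d`: if `A` is of finite
type, this says that `Spec A` is an integral variety of dimension `d`. -/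
structure IsDomainOfTrdeg (k A : Type*) [Field k] [CommRing A] [Algebra k A] (d : ℕ) : Prop where
  isDomain : IsDomain A
  trdeg_eq : Algebra.trdeg k A = d

theorem isDomainOfTrdeg_iff_of_algEquiv {k A B : Type*} [Field k] [CommRing A] [Algebra k A]
    [CommRing B] [Algebra k B] (e : A ≃ₐ[k] B) (d : ℕ) :
    IsDomainOfTrdeg k A d ↔ IsDomainOfTrdeg k B d := by
  have h : Algebra.trdeg k A = d ↔ Algebra.trdeg k B = d := by
    rw [← Cardinal.lift_eq_nat_iff, e.lift_trdeg_eq, Cardinal.lift_eq_nat_iff]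
  exact ⟨fun ⟨h₁, h₂⟩ => ⟨e.toMulEquiv.isDomain_iff.1 h₁, h.1 h₂⟩,
    fun ⟨h₁, h₂⟩ => ⟨e.toMulEquiv.isDomain_iff.2 h₁, h.2 h₂⟩⟩

theorem isDomainOfTrdeg_iff_of_isLocalization {k A S : Type*} [Field k] [CommRing A]
    [Algebra k A] [CommRing S] [Algebra k S] [Algebra A S] [IsScalarTower k A S]
    {M : Submonoid A} (hM : M ≤ nonZeroDivisors A) [IsLocalization M S] (d : ℕ) :
    IsDomainOfTrdeg k A d ↔ IsDomainOfTrdeg k S d := by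
  have inj : Function.Injective (algebraMap A S) := IsLocalization.injective S hM
  have hdom : IsDomain A ↔ IsDomain S :=
    ⟨fun _ => IsLocalization.isDomain_of_le_nonZeroDivisors S hM, fun _ => inj.isDomain _⟩
  have htrdeg (_ : IsDomain A) : Algebra.trdeg k A = d ↔ Algebra.trdeg k S = d := by
    have := hdom.1 ‹_›
    have := (faithfulSMul_iff_algebraMap_injective A S).2 inj
    have : Algebra.IsAlgebraic A S := IsLocalization.isAlgebraic _ M
    have := lift_trdeg_add_eq k A S
    rw [trdeg_eq_zero (R := A), Cardinal.lift_zero, add_zero] at this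
    rw [← Cardinal.lift_eq_nat_iff, this, Cardinal.lift_eq_nat_iff]
  exact ⟨fun ⟨h₁, h₂⟩ => ⟨hdom.1 h₁, (htrdeg h₁).1 h₂⟩,
    fun ⟨h₁, h₂⟩ => ⟨hdom.2 h₁, (htrdeg (hdom.2 h₁)).2 h₂⟩⟩

theorem holdsGenerically_isDomainOfTrdeg_iff_of_isLocalization_away {R : Type u} {B C : Type v}
    [CommRing R] [IsDomain R] [CommRing B] [Algebra R B] [Algebra.FiniteType R B] [CommRing C]
    [Algebra R C] [Algebra B C] [IsScalarTower R B C] {b : B} (hb : b ∈ nonZeroDivisors B)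
    [IsLocalization.Away b C] :
    HoldsGenerically R fun (k : Type w) _ _ => ∀ d,
      IsDomainOfTrdeg k (k ⊗[R] B) d ↔ IsDomainOfTrdeg k (k ⊗[R] C) d := by
  refine (holdsGenerically_tmul_mem_nonZeroDivisors R hb).mono fun k _ _ hbk d => ?_
  algebraize [(Algebra.TensorProduct.map (AlgHom.id k k) (IsScalarTower.toAlgHom R B C)).toRingHom]
  have : IsScalarTower k (k ⊗[R] B) (k ⊗[R] C) := .of_algebraMap_eq' <| RingHom.ext fun x => by
    simp [RingHom.algebraMap_toAlgebra]
  have := IsLocalization.tensorProduct_tensorProduct_right R k (.powers b) C <|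
    RingHom.ext fun x => by simp [RingHom.algebraMap_toAlgebra]
  have powers_le :
      Submonoid.map (Algebra.TensorProduct.includeRight (R := R) (A := k)) (.powers b) ≤
        nonZeroDivisors (k ⊗[R] B) := by
    rintro _ ⟨_, ⟨n, rfl⟩, rfl⟩
    simpa using pow_mem hbk n
  exact isDomainOfTrdeg_iff_of_isLocalization powers_le d

theorem exists_forall_pow_mul_mem_range {R B C : Type*} (L : Type*) [CommRing R] [CommRing B]
    [CommRing C] [CommRing L] [Algebra R B] [Algebra R C] [Algebra B C] [Algebra B L] [Algebra C L]
    [IsScalarTower R B C] [IsScalarTower B C L] [IsFractionRing B L] [FaithfulSMul C L]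
    [Algebra.FiniteType R C] :
    ∃ b ∈ nonZeroDivisors B,
      ∀ c : C, ∃ n : ℕ, algebraMap B C b ^ n * c ∈ (algebraMap B C).range := by
  classical
  obtain ⟨s, hs⟩ := Algebra.FiniteType.out (R := R) (A := C)
  obtain ⟨b, hb⟩ := IsLocalization.exist_integer_multiples_of_finset (nonZeroDivisors B)
    (s.image (algebraMap C L))
  have pow_mem_range (n : ℕ) : algebraMap B C b ^ n ∈ (algebraMap B C).range :=
    (algebraMap B C).range.pow_mem ⟨_, rfl⟩ n
  refine ⟨b, b.2, fun c => ?_⟩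
  have hc : c ∈ Algebra.adjoin R (s : Set C) := hs ▸ Algebra.mem_top
  induction hc using Algebra.adjoin_induction with
  | mem x hx =>
    obtain ⟨a, ha⟩ := hb _ (Finset.mem_image_of_mem _ hx)
    refine ⟨1, a, FaithfulSMul.algebraMap_injective C L ?_⟩
    rw [← IsScalarTower.algebraMap_apply, ha, pow_one, map_mul, ← IsScalarTower.algebraMap_apply]
    exact Algebra.smul_def _ _
  | algebraMap r => exact ⟨0, algebraMap R B r, by simp [← IsScalarTower.algebraMap_apply]⟩
  | add x y _ _ hx hy =>
    obtain ⟨m, hm⟩ := hx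
    obtain ⟨n, hn⟩ := hy
    refine ⟨m + n, ?_⟩
    convert add_mem (mul_mem (pow_mem_range n) hm) (mul_mem (pow_mem_range m) hn) using 1
    ring
  | mul x y _ _ hx hy =>
    obtain ⟨m, hm⟩ := hx
    obtain ⟨n, hn⟩ := hy
    refine ⟨m + n, ?_⟩
    convert mul_mem hm hn using 1
    ring

theorem isLocalization_away_of_forall_pow_mul_mem_range {B C S : Type*} [CommRing B] [CommRing C]
    [CommRing S] [Algebra B C] [Algebra C S] [Algebra B S] [IsScalarTower B C S]
    [FaithfulSMul B C] {b : B}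
    (h : ∀ c : C, ∃ n : ℕ, algebraMap B C b ^ n * c ∈ (algebraMap B C).range)
    [IsLocalization.Away (algebraMap B C b) S] : IsLocalization.Away b S := by
  have isUnit_b : IsUnit (algebraMap B S b) := by
    rw [IsScalarTower.algebraMap_apply B C S]
    exact IsLocalization.Away.algebraMap_isUnit _
  refine (isLocalization_iff _ _).2 ⟨?_, fun s => ?_, fun {x y} hxy => ?_⟩
  · rintro ⟨_, n, rfl⟩
    simpa using isUnit_b.pow n
  · obtain ⟨n, c, hc⟩ := IsLocalization.Away.surj (algebraMap B C b) s
    obtain ⟨m, a, ha⟩ := h c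
    refine ⟨(a, ⟨b ^ (n + m), n + m, rfl⟩), ?_⟩
    simp only [IsScalarTower.algebraMap_apply B C S, ha, map_mul, ← hc, map_pow]
    ring
  · rw [IsScalarTower.algebraMap_apply B C S, IsScalarTower.algebraMap_apply B C S] at hxy
    obtain ⟨n, hn⟩ := IsLocalization.Away.exists_of_eq (algebraMap B C b) hxy
    refine ⟨⟨b ^ n, n, rfl⟩, FaithfulSMul.algebraMap_injective B C ?_⟩
    simpa using hn

theorem holdsGenerically_isDomainOfTrdeg_iff_of_isFractionRing {R : Type u} {B C : Type v}
    (L : Type*) [CommRing R] [IsDomain R] [CommRing B] [Algebra R B] [Algebra.FiniteType R B]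
    [CommRing C] [Algebra R C] [Algebra.FiniteType R C] [Algebra B C] [IsScalarTower R B C]
    [CommRing L] [Algebra B L] [Algebra C L] [IsScalarTower B C L] [IsFractionRing B L]
    [FaithfulSMul C L] :
    HoldsGenerically R fun (k : Type w) _ _ => ∀ d,
      IsDomainOfTrdeg k (k ⊗[R] B) d ↔ IsDomainOfTrdeg k (k ⊗[R] C) d := by
  obtain ⟨b, hb, hbC⟩ := exists_forall_pow_mul_mem_range (R := R) (B := B) (C := C) L
  let S := Localization.Away (algebraMap B C b)
  have : FaithfulSMul B C := .tower_bot B C L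
  have : IsLocalization.Away b S := isLocalization_away_of_forall_pow_mul_mem_range hbC
  have hbC : algebraMap B C b ∈ nonZeroDivisors C := by
    refine mem_nonZeroDivisors_of_injective (FaithfulSMul.algebraMap_injective C L) ?_
    rw [← IsScalarTower.algebraMap_apply]
    exact (IsLocalization.map_units L ⟨b, hb⟩).mem_nonZeroDivisors
  exact ((holdsGenerically_isDomainOfTrdeg_iff_of_isLocalization_away (C := S) hb).and
    (holdsGenerically_isDomainOfTrdeg_iff_of_isLocalization_away (C := S) hbC)).mono
    fun k _ _ h d => (h.1 d).trans (h.2 d).symm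

theorem holdsGenerically_isDomainOfTrdeg_iff_of_subalgebra {R : Type u} {L : Type v} [CommRing R]
    [IsDomain R] [Field L] [Algebra R L] (B C : Subalgebra R L) [IsFractionRing B L]
    [IsFractionRing C L] (hB : B.FG) (hC : C.FG) :
    HoldsGenerically R fun (k : Type w) _ _ => ∀ d,
      IsDomainOfTrdeg k (k ⊗[R] B) d ↔ IsDomainOfTrdeg k (k ⊗[R] C) d := by
  have iff_sup (B C : Subalgebra R L) [IsFractionRing B L] (hB : B.FG) (hC : C.FG) :
      HoldsGenerically R fun (k : Type w) _ _ => ∀ d,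
        IsDomainOfTrdeg k (k ⊗[R] B) d ↔ IsDomainOfTrdeg k (k ⊗[R] ↥(B ⊔ C)) d := by
    have := B.fg_iff_finiteType.1 hB
    have := (B ⊔ C).fg_iff_finiteType.1 (hB.sup hC)
    algebraize [(Subalgebra.inclusion (le_sup_left : B ≤ B ⊔ C)).toRingHom]
    have : IsScalarTower R B ↥(B ⊔ C) := .of_algebraMap_eq' rfl
    have : IsScalarTower B ↥(B ⊔ C) L := .of_algebraMap_eq' rfl
    exact holdsGenerically_isDomainOfTrdeg_iff_of_isFractionRing L
  exact ((iff_sup B C hB hC).and (sup_comm B C ▸ iff_sup C B hC hB)).mono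
    fun k _ _ h d => (h.1 d).trans (h.2 d).symm

end Birational

section Spreading

theorem isFractionRing_adjoin {R F L : Type*} [CommRing R] [Field F] [Algebra R F]
    [IsFractionRing R F] [Field L] [Algebra F L] [Algebra R L] [IsScalarTower R F L] {s : Set L}
    (hs : IntermediateField.adjoin F s = ⊤) : IsFractionRing (Algebra.adjoin R s) L := by
  let A := Algebra.adjoin R s
  have inj : Function.Injective (algebraMap A L) := Subtype.val_injective
  let φ : FractionRing A →+* L := IsFractionRing.lift inj
  have coe_mem (a : A) : (a : L) ∈ φ.fieldRange :=
    ⟨algebraMap _ _ a, IsFractionRing.lift_algebraMap inj a⟩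
  have algebraMap_mem (c : F) : algebraMap F L c ∈ φ.fieldRange := by
    obtain ⟨a, b, -, rfl⟩ := IsFractionRing.div_surjective (A := R) c
    simp only [map_div₀, ← IsScalarTower.algebraMap_apply]
    exact div_mem (coe_mem (algebraMap R A a)) (coe_mem (algebraMap R A b))
  have adjoin_le : IntermediateField.adjoin F s ≤ φ.fieldRange.toIntermediateField algebraMap_mem :=
    IntermediateField.adjoin_le_iff.2 fun x hx => coe_mem ⟨x, Algebra.subset_adjoin hx⟩
  refine IsFractionRing.of_field _ _ fun z => ?_
  obtain ⟨y, rfl⟩ := adjoin_le (hs ▸ IntermediateField.mem_top : z ∈ _)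
  obtain ⟨a, b, -, rfl⟩ := IsFractionRing.div_surjective (A := A) y
  refine ⟨a, b, ?_⟩
  change φ _ = _
  rw [map_div₀, IsFractionRing.lift_algebraMap, IsFractionRing.lift_algebraMap]

attribute [local instance] MvPolynomial.algebraMvPolynomial in
theorem exists_C_mul_mem_of_map_le_map {σ R F : Type*} [CommRing R] [IsDomain R]
    [Field F] [Algebra R F] [IsFractionRing R F]
    {I J : Ideal (MvPolynomial σ R)} (hJ : J.FG)
    (hJI : J.map (map (algebraMap R F)) ≤ I.map (map (algebraMap R F))) :
    ∃ g : R, g ≠ 0 ∧ ∀ h ∈ J, C g * h ∈ I := by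
  have exists_mul_mem (h) (hh : h ∈ J) : ∃ c : R, c ≠ 0 ∧ C c * h ∈ I := by
    obtain ⟨_, ⟨c, hc, rfl⟩, hc'⟩ := (IsLocalization.algebraMap_mem_map_algebraMap_iff
      ((nonZeroDivisors R).map (C (σ := σ))) (MvPolynomial σ F) I h).1
        (hJI (Ideal.mem_map_of_mem _ hh))
    exact ⟨c, nonZeroDivisors.ne_zero hc, hc'⟩
  obtain ⟨s, rfl⟩ := hJ
  choose! c hc hcI using exists_mul_mem
  refine ⟨∏ h ∈ s, c h, Finset.prod_ne_zero_iff.2 fun h hh => hc h (Ideal.subset_span hh), ?_⟩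
  suffices Ideal.span s ≤ I.colon {C (∏ h ∈ s, c h)} from fun h hh => by
    rw [mul_comm]
    exact Submodule.mem_colon_singleton.1 (this hh)
  refine Ideal.span_le.2 fun h hh => Submodule.mem_colon_singleton.2 ?_
  obtain ⟨e, he⟩ := Finset.dvd_prod_of_mem c hh
  rw [he, map_mul, smul_eq_mul, ← mul_assoc, mul_comm h]
  exact I.mul_mem_right _ (hcI h (Ideal.subset_span hh))

/-- The base change of `R[X]/J` to `k` is presented by the same equations over `k`. -/
def tensorQuotientMvPolynomialEquiv {σ R : Type*} (k : Type*) [CommRing R] [CommRing k]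
    [Algebra R k] (J : Ideal (MvPolynomial σ R)) :
    k ⊗[R] (MvPolynomial σ R ⧸ J) ≃ₐ[k] MvPolynomial σ k ⧸ J.map (map (algebraMap R k)) :=
  (Algebra.TensorProduct.tensorQuotientEquiv k (MvPolynomial σ R) k J).trans <|
    Ideal.quotientEquivAlg _ _ (algebraTensorAlgEquiv R k) <| by
      have comp_eq : ((algebraTensorAlgEquiv R k : k ⊗[R] MvPolynomial σ R ≃ₐ[k] _) : _ →+* _).comp
          (Algebra.TensorProduct.includeRight : MvPolynomial σ R →ₐ[R] k ⊗[R] _).toRingHom =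
          map (algebraMap R k) := by
        ext <;> simp
      rw [← comp_eq]
      exact (Ideal.map_map _ _).symm

variable {R : Type u} {F : Type*} [CommRing R] [IsDomain R] [IsNoetherianRing R] [Field F]
  [Algebra R F] [IsFractionRing R F] {σ τ : Type*} [Finite σ] [Finite τ]
  {L : Type*} [Field L] [Algebra F L] [Algebra R L] [IsScalarTower R F L]

theorem holdsGenerically_map_eq_map_ker_aeval {I : Ideal (MvPolynomial σ R)} {x : σ → L}
    (hI : I.map (map (algebraMap R F)) = RingHom.ker (aeval x : MvPolynomial σ F →ₐ[F] L)) :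
    HoldsGenerically R fun (k : Type w) _ _ =>
      I.map (map (algebraMap R k)) =
        (RingHom.ker (aeval x : MvPolynomial σ R →ₐ[R] L)).map (map (algebraMap R k)) := by
  set J := RingHom.ker (aeval x : MvPolynomial σ R →ₐ[R] L)
  have mem_J (h) : h ∈ J ↔ map (algebraMap R F) h ∈ I.map (map (algebraMap R F)) := by
    rw [hI, RingHom.mem_ker, RingHom.mem_ker, aeval_map_algebraMap]
  have hIJ : I ≤ J := fun h hh => (mem_J h).2 (Ideal.mem_map_of_mem _ hh)
  obtain ⟨g, hg, hgJ⟩ := exists_C_mul_mem_of_map_le_map (IsNoetherian.noetherian J)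
    (Ideal.map_le_iff_le_comap.2 fun h hh => (mem_J h).1 hh)
  refine ⟨g, hg, fun k _ _ hgk => le_antisymm (Ideal.map_mono hIJ) <|
    Ideal.map_le_iff_le_comap.2 fun h hh => ?_⟩
  have h_mem := Ideal.mem_map_of_mem (map (algebraMap R k)) (hgJ h hh)
  rw [map_mul, map_C] at h_mem
  exact (Ideal.unit_mul_mem_iff_mem _ (hgk.isUnit.map C)).1 h_mem

theorem holdsGenerically_isDomainOfTrdeg_quotient_iff {I : Ideal (MvPolynomial σ R)} {x : σ → L}
    (hI : I.map (map (algebraMap R F)) = RingHom.ker (aeval x : MvPolynomial σ F →ₐ[F] L)) :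
    HoldsGenerically R fun (k : Type w) _ _ => ∀ d,
      IsDomainOfTrdeg k (MvPolynomial σ k ⧸ I.map (map (algebraMap R k))) d ↔
        IsDomainOfTrdeg k (k ⊗[R] Algebra.adjoin R (Set.range x)) d := by
  refine (holdsGenerically_map_eq_map_ker_aeval hI).mono fun k _ _ hk d => ?_
  rw [hk]
  let e : (MvPolynomial σ R ⧸ RingHom.ker (aeval x : _ →ₐ[R] L)) ≃ₐ[R]
      Algebra.adjoin R (.range x) :=
    (Ideal.quotientKerEquivRange _).trans <|
      Subalgebra.equivOfEq _ _ (Algebra.adjoin_range_eq_range_aeval R x).symm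
  let e_k := (tensorQuotientMvPolynomialEquiv (R := R) k _).symm.trans <|
    Algebra.TensorProduct.congr AlgEquiv.refl e
  exact isDomainOfTrdeg_iff_of_algEquiv e_k d

theorem holdsGenerically_isDomainOfTrdeg_iff_of_adjoin_eq_top {I : Ideal (MvPolynomial σ R)}
    {J : Ideal (MvPolynomial τ R)} {x : σ → L} {y : τ → L}
    (hI : I.map (map (algebraMap R F)) = RingHom.ker (aeval x : MvPolynomial σ F →ₐ[F] L))
    (hJ : J.map (map (algebraMap R F)) = RingHom.ker (aeval y : MvPolynomial τ F →ₐ[F] L))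
    (hx : IntermediateField.adjoin F (Set.range x) = ⊤)
    (hy : IntermediateField.adjoin F (Set.range y) = ⊤) :
    HoldsGenerically R fun (k : Type w) _ _ => ∀ d,
      IsDomainOfTrdeg k (MvPolynomial σ k ⧸ I.map (map (algebraMap R k))) d ↔
        IsDomainOfTrdeg k (MvPolynomial τ k ⧸ J.map (map (algebraMap R k))) d := by
  have := isFractionRing_adjoin (R := R) hx
  have := isFractionRing_adjoin (R := R) hy
  refine ((holdsGenerically_isDomainOfTrdeg_quotient_iff hI).and
    (holdsGenerically_isDomainOfTrdeg_quotient_iff hJ)).and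
    (holdsGenerically_isDomainOfTrdeg_iff_of_subalgebra _ _
      (Subalgebra.fg_def.2 ⟨_, Set.finite_range x, rfl⟩)
      (Subalgebra.fg_def.2 ⟨_, Set.finite_range y, rfl⟩)) |>.mono
    fun k _ _ h d => ?_
  rw [h.1.1, h.1.2, h.2]

end Spreading

section Hypersurface

theorem injective_of_surjective_of_trdeg_eq {k A B : Type*} [Field k] [CommRing A] [IsDomain A]
    [Algebra k A] [CommRing B] [IsDomain B] [Algebra k B] {d : ℕ} {φ : A →ₐ[k] B}
    (hφ : Function.Surjective φ) (hA : Algebra.trdeg k A = d) (hB : Algebra.trdeg k B = d) :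
    Function.Injective φ := by
  obtain ⟨s, hs⟩ := exists_isTranscendenceBasis k B
  have card_s : Cardinal.mk s = d := hs.cardinalMk_eq_trdeg.trans hB
  have : Finite s := Cardinal.lt_aleph0_iff_finite.1 (card_s ▸ Cardinal.natCast_lt_aleph0)
  obtain ⟨x, φ_x⟩ : ∃ x : s → A, φ ∘ x = (↑) :=
    ⟨fun b => Function.surjInv hφ b, funext fun b => Function.surjInv_eq hφ b⟩
  have x_indep : AlgebraicIndependent k x :=
    AlgebraicIndependent.of_comp φ (φ_x.symm ▸ hs.1)
  have x_basis : IsTranscendenceBasis k x := x_indep.isTranscendenceBasis_of_lift_trdeg_le_of_finite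
    (by rw [hA, card_s]; simp)
  have := x_basis.isAlgebraic
  refine (injective_iff_map_eq_zero φ).2 fun a ha => by_contra fun ha0 => ?_
  obtain ⟨c, hc0, hac⟩ := (Algebra.IsAlgebraic.isAlgebraic
    (R := Algebra.adjoin k (Set.range x)) a).exists_nonzero_dvd (mem_nonZeroDivisors_of_ne_zero ha0)
  obtain ⟨q, hq⟩ := (Algebra.adjoin_range_eq_range_aeval k x).le c.2
  have aeval_q : aeval ((↑) : s → B) q = φ c := by
    rw [← φ_x, ← hq]
    exact (comp_aeval_apply x φ q).symm
  have φ_c : φ c = 0 := zero_dvd_iff.1 (ha ▸ map_dvd φ hac)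
  rw [(injective_iff_map_eq_zero _).1 hs.1 q (aeval_q.trans φ_c)] at hq
  exact hc0 (Subtype.ext (hq.symm.trans (map_zero _)))

variable {k σ : Type*} [Field k] {f : MvPolynomial σ k} {n : ℕ}

theorem trdeg_quotient_span_le [Finite σ] (hf : Prime f) (hn : Nat.card σ = n + 1) :
    Algebra.trdeg k (MvPolynomial σ k ⧸ Ideal.span {f}) ≤ n := by
  have := (Ideal.span_singleton_prime hf.ne_zero).2 hf
  have trdeg_mvPolynomial : Algebra.trdeg k (MvPolynomial σ k) = (n + 1 : ℕ) := by
    rw [MvPolynomial.trdeg_of_isDomain, ← Nat.cast_card, hn, Cardinal.lift_natCast]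
  have le_succ : Algebra.trdeg k (MvPolynomial σ k ⧸ Ideal.span {f}) ≤ (n + 1 : ℕ) :=
    trdeg_mvPolynomial ▸
      trdeg_le_of_surjective (Ideal.Quotient.mkₐ k _) Ideal.Quotient.mk_surjective
  obtain ⟨m, hm⟩ := Cardinal.lt_aleph0.1 (le_succ.trans_lt Cardinal.natCast_lt_aleph0)
  rw [hm] at le_succ ⊢
  refine Nat.cast_le.2 (Nat.lt_succ_iff.1 <| (Nat.cast_le.1 le_succ).lt_of_ne ?_)
  rintro rfl
  have := injective_of_surjective_of_trdeg_eq (φ := Ideal.Quotient.mkₐ k (Ideal.span {f}))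
    Ideal.Quotient.mk_surjective trdeg_mvPolynomial hm
  exact hf.ne_zero <| this <| by simp

theorem algebraicIndependent_mk_X_of_degreeOf_ne_zero {i : σ} (hi : f.degreeOf i ≠ 0) :
    AlgebraicIndependent k fun j : {j // j ≠ i} => Ideal.Quotient.mk (Ideal.span {f}) (X j) := by
  classical
  refine (injective_iff_map_eq_zero _).2 fun q hq => by_contra fun hq0 => ?_
  have aeval_eq : aeval (fun j : {j // j ≠ i} => Ideal.Quotient.mk (Ideal.span {f}) (X j)) =
      (Ideal.Quotient.mkₐ k (Ideal.span {f})).comp (rename Subtype.val) := by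
    ext j; simp
  rw [aeval_eq, AlgHom.comp_apply, Ideal.Quotient.mkₐ_eq_mk, Ideal.Quotient.eq_zero_iff_dvd] at hq
  obtain ⟨g, hg⟩ := hq
  have fg_ne_zero : f * g ≠ 0 :=
    hg ▸ (map_ne_zero_iff _ (rename_injective _ Subtype.val_injective)).2 hq0
  have i_notMem_vars : i ∉ (f * g).vars := fun h => by
    obtain ⟨j, -, hj⟩ := Finset.mem_image.1 (vars_rename _ q (hg ▸ h))
    exact j.2 hj
  rw [mem_vars_iff_degreeOf_ne_zero, not_not, degreeOf_mul_eq (left_ne_zero_of_mul fg_ne_zero)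
    (right_ne_zero_of_mul fg_ne_zero)] at i_notMem_vars
  omega

theorem le_trdeg_quotient_span [Finite σ] (hf0 : f ≠ 0) (hf : ¬ IsUnit f)
    (hn : Nat.card σ = n + 1) : n ≤ Algebra.trdeg k (MvPolynomial σ k ⧸ Ideal.span {f}) := by
  obtain ⟨i, hi⟩ : f.vars.Nonempty := by
    refine Finset.nonempty_iff_ne_empty.2 fun h => ?_
    rw [vars_eq_empty_iff_eq_C] at h
    rw [h, Ne, map_eq_zero_iff _ (C_injective _ _)] at hf0
    exact hf (h ▸ (isUnit_iff_ne_zero.2 hf0).map C)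
  have := (algebraicIndependent_mk_X_of_degreeOf_ne_zero
    (mem_vars_iff_degreeOf_ne_zero.1 hi)).lift_cardinalMk_le_trdeg
  have card_ne : Nat.card {j // j ≠ i} = n := by
    cases nonempty_fintype σ
    classical
    rw [Nat.card_eq_fintype_card] at hn ⊢
    rw [Fintype.card_subtype_compl, Fintype.card_subtype_eq, hn, Nat.add_sub_cancel]
  rw [← Nat.cast_card, card_ne, Cardinal.lift_natCast] at this
  simpa using this

theorem isDomainOfTrdeg_quotient_span [Finite σ] (hf : Irreducible f) (hn : Nat.card σ = n + 1) :
    IsDomainOfTrdeg k (MvPolynomial σ k ⧸ Ideal.span {f}) n where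
  isDomain := (Ideal.Quotient.isDomain_iff_prime _).2 <|
    (Ideal.span_singleton_prime hf.ne_zero).2 hf.prime
  trdeg_eq := (trdeg_quotient_span_le hf.prime hn).antisymm
    (le_trdeg_quotient_span hf.ne_zero hf.not_isUnit hn)

theorem exists_ker_aeval_eq_span {L : Type*} [Finite σ] [Field L] [Algebra k L]
    (hn : Nat.card σ = n + 1) (hL : Algebra.trdeg k L = n) {x : σ → L}
    (hx : IntermediateField.adjoin k (Set.range x) = ⊤) :
    ∃ f : MvPolynomial σ k, Irreducible f ∧
      RingHom.ker (aeval x : MvPolynomial σ k →ₐ[k] L) = Ideal.span {f} := by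
  set φ : MvPolynomial σ k →ₐ[k] L := aeval x
  have := isFractionRing_adjoin (R := k) hx
  let e : (MvPolynomial σ k ⧸ RingHom.ker φ) ≃ₐ[k] Algebra.adjoin k (Set.range x) :=
    (Ideal.quotientKerEquivRange φ).trans <|
      Subalgebra.equivOfEq _ _ (Algebra.adjoin_range_eq_range_aeval k x).symm
  obtain ⟨_, trdeg_ker⟩ : IsDomainOfTrdeg k (MvPolynomial σ k ⧸ RingHom.ker φ) n :=
    (isDomainOfTrdeg_iff_of_algEquiv e n).2 <|
      (isDomainOfTrdeg_iff_of_isLocalization (S := L) (le_refl (nonZeroDivisors _)) n).2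
        ⟨inferInstance, hL⟩
  have ker_ne_bot : RingHom.ker φ ≠ ⊥ := fun h => by
    have x_indep : AlgebraicIndependent k x := (RingHom.injective_iff_ker_eq_bot φ).2 h
    have card_le := x_indep.lift_cardinalMk_le_trdeg
    rw [hL, ← Nat.cast_card, hn, Cardinal.lift_natCast, Cardinal.lift_natCast,
      Nat.cast_le] at card_le
    omega
  obtain ⟨f, hf, hf'⟩ := (RingHom.ker_isPrime φ).exists_mem_prime_of_ne_bot ker_ne_bot
  have span_le : Ideal.span {f} ≤ RingHom.ker φ := (Ideal.span_singleton_le_iff_mem _).2 hf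
  refine ⟨f, hf'.irreducible, le_antisymm (fun q hq => ?_) span_le⟩
  obtain ⟨_, trdeg_span⟩ := isDomainOfTrdeg_quotient_span hf'.irreducible hn
  have inj := injective_of_surjective_of_trdeg_eq (φ := Ideal.Quotient.factorₐ k span_le)
    (Ideal.Quotient.factor_surjective span_le) trdeg_span trdeg_ker
  exact Ideal.Quotient.eq_zero_iff_mem.1 <| inj <| by
    simpa using Ideal.Quotient.eq_zero_iff_mem.2 hq

end Hypersurface

section SeparablyGenerated

variable (k : Type*) [Field k]

theorem linearIndepOn_pow_of_isGeometricallyReduced {L : Type*} [Field L] [Algebra k L]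
    [Algebra.IsGeometricallyReduced k L] (p : ℕ) [hp : Fact p.Prime] [CharP k p] {s : Finset L}
    (hs : LinearIndepOn k id (s : Set L)) : LinearIndepOn k (· ^ p) (s : Set L) := by
  let kbar := AlgebraicClosure k
  have : CharP (kbar ⊗[k] L) p := charP_of_injective_algebraMap (algebraMap k _).injective p
  rw [linearIndepOn_finset_iff]
  intro c hc i hi
  choose d hd using fun j => IsAlgClosed.exists_pow_nat_eq (algebraMap k kbar (c j)) hp.out.pos
  have sum_pow : (∑ j ∈ s, d j ⊗ₜ[k] j) ^ p = 0 := by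
    have tmul_pow (j : L) : (d j ⊗ₜ[k] j) ^ p = (1 : kbar) ⊗ₜ[k] (c j • j ^ p) := by
      rw [Algebra.TensorProduct.tmul_pow, hd, Algebra.algebraMap_eq_smul_one,
        TensorProduct.smul_tmul]
    simp_rw [sum_pow_char, tmul_pow, ← TensorProduct.tmul_sum, hc, TensorProduct.tmul_zero]
  have hd0 : d i = 0 := linearIndepOn_finset_iff.1
    (Module.Flat.linearIndependent_one_tmul (S := kbar) hs) d
    (by simpa [TensorProduct.smul_tmul'] using eq_zero_of_pow_eq_zero sum_pow) i hi
  exact (map_eq_zero _).1 (by rw [← hd, hd0, zero_pow hp.out.ne_zero])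

variable (L : Type*) [Field L] [Algebra k L] [Algebra.EssFiniteType k L]
  [Algebra.IsGeometricallyReduced k L]

theorem exists_isTranscendenceBasis_and_isSeparable_of_isGeometricallyReduced :
    ∃ s : Finset L, IsTranscendenceBasis k ((↑) : s → L) ∧
      Algebra.IsSeparable (IntermediateField.adjoin k (s : Set L)) L := by
  obtain ⟨p, _⟩ := CharP.exists k
  obtain hp | rfl := CharP.char_is_prime_or_zero k p
  · have : Fact p.Prime := ⟨hp⟩
    exact exists_isTranscendenceBasis_and_isSeparable_of_linearIndepOn_pow_of_essFiniteType p hp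
      fun s => linearIndepOn_pow_of_isGeometricallyReduced k p
  · have := CharP.charP_to_charZero k
    exact exists_isTranscendenceBasis_and_isSeparable_of_perfectField k L

theorem exists_trdeg_eq_and_adjoin_range_eq_top :
    ∃ (n : ℕ) (x : Fin (n + 1) → L), Algebra.trdeg k L = n ∧
      IntermediateField.adjoin k (Set.range x) = ⊤ := by
  obtain ⟨s, hs, hsep⟩ := exists_isTranscendenceBasis_and_isSeparable_of_isGeometricallyReduced k L
  let E := IntermediateField.adjoin k (s : Set L)
  have : Algebra.EssFiniteType E L := .of_comp k E L
  have : Module.Finite E L := Algebra.finite_of_essFiniteType_of_isAlgebraic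
  obtain ⟨z, hz⟩ := Field.exists_primitive_element E L
  refine ⟨s.card, Fin.cons z ((↑) ∘ s.equivFin.symm), ?_, ?_⟩
  · simpa using hs.cardinalMk_eq_trdeg.symm
  · rw [Fin.range_cons]
    have E_adjoin_z := IntermediateField.adjoin_adjoin_left k (s : Set L) {z}
    rw [hz, IntermediateField.restrictScalars_top] at E_adjoin_z
    rw [E_adjoin_z, Set.range_comp, s.equivFin.symm.range_eq_univ, Set.image_univ,
      Subtype.range_coe, Set.union_singleton]

end SeparablyGenerated

section KrullDim

theorem ringKrullDim_eq_of_isIntegral (A B : Type*) [CommRing A] [CommRing B] [Algebra A B]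
    [Algebra.IsIntegral A B] [FaithfulSMul A B] : ringKrullDim B = ringKrullDim A := by
  refine le_antisymm ?_ (iSup_le fun l => ?_)
  · exact Order.krullDim_le_of_strictMono (PrimeSpectrum.comap (algebraMap A B))
      fun _ _ h => Ideal.IsIntegral.comap_lt_comap h
  · obtain ⟨P, _, _⟩ := l.head.asIdeal.nonempty_primesOver (S := B)
    obtain ⟨l', length_eq, -⟩ := Ideal.exists_ltSeries_of_hasGoingUp l P
    exact length_eq ▸ le_iSup (fun l : LTSeries (PrimeSpectrum B) => (l.length : WithBot ℕ∞)) l'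

theorem IsDomainOfTrdeg.ringKrullDim_eq {k A : Type*} [Field k] [CommRing A] [Algebra k A]
    [Algebra.FiniteType k A] {d : ℕ} (hA : IsDomainOfTrdeg k A d) : ringKrullDim A = d := by
  obtain ⟨_, trdeg_eq⟩ := hA
  obtain ⟨m, g, g_inj, g_int⟩ := exists_integral_inj_algHom_of_fg k A
  algebraize [g.toRingHom]
  have : IsScalarTower k (MvPolynomial (Fin m) k) A := .of_algHom g
  have : FaithfulSMul (MvPolynomial (Fin m) k) A :=
    (faithfulSMul_iff_algebraMap_injective _ _).2 g_inj
  have m_eq : m = d := by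
    have := lift_trdeg_add_eq k (MvPolynomial (Fin m) k) A
    rw [MvPolynomial.trdeg_of_isDomain, trdeg_eq_zero, trdeg_eq] at this
    simpa using this
  rw [ringKrullDim_eq_of_isIntegral (MvPolynomial (Fin m) k) A,
    MvPolynomial.ringKrullDim_of_isNoetherianRing, ringKrullDim_eq_zero_of_field, m_eq]
  simp

end KrullDim

section PolynomialOverFractionField

attribute [local instance] MvPolynomial.algebraMvPolynomial in
theorem exists_associated_map_algebraMap {σ F : Type*} (R : Type*) [CommRing R] [Field F]
    [Algebra R F] [IsFractionRing R F] (f : MvPolynomial σ F) :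
    ∃ f' : MvPolynomial σ R, Associated (map (algebraMap R F) f') f := by
  obtain ⟨⟨f', _, b, hb, rfl⟩, h⟩ := IsLocalization.surj ((nonZeroDivisors R).map (C (σ := σ))) f
  have unit_b : IsUnit (map (σ := σ) (algebraMap R F) (C b)) := by
    rw [map_C]
    exact (IsLocalization.map_units F ⟨b, hb⟩).map C
  refine ⟨f', ?_⟩
  rw [← show f * map (algebraMap R F) (C b) = map (algebraMap R F) f' from h]
  exact associated_mul_unit_left f _ unit_b

end PolynomialOverFractionField

section CoordinateRing

variable {σ F : Type*} [Field F] (p : Ideal (MvPolynomial σ F)) (L : Type*) [Field L] [Algebra F L]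
  [Algebra (MvPolynomial σ F ⧸ p) L] [IsScalarTower F (MvPolynomial σ F ⧸ p) L]

theorem aeval_algebraMap_mk_X (f : MvPolynomial σ F) :
    aeval (fun i => algebraMap (MvPolynomial σ F ⧸ p) L (Ideal.Quotient.mk p (X i))) f =
      algebraMap (MvPolynomial σ F ⧸ p) L (Ideal.Quotient.mk p f) :=
  (DFunLike.congr_fun (aeval_unique ((IsScalarTower.toAlgHom F (MvPolynomial σ F ⧸ p) L).comp
    (Ideal.Quotient.mkₐ F p))) f).symm

theorem ker_aeval_algebraMap_mk_X [FaithfulSMul (MvPolynomial σ F ⧸ p) L] :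
    RingHom.ker (aeval fun i => algebraMap (MvPolynomial σ F ⧸ p) L (Ideal.Quotient.mk p (X i)) :
      MvPolynomial σ F →ₐ[F] L) = p := by
  ext f
  rw [RingHom.mem_ker, aeval_algebraMap_mk_X, FaithfulSMul.algebraMap_eq_zero_iff,
    Ideal.Quotient.eq_zero_iff_mem]

theorem adjoin_range_algebraMap_mk_X [IsFractionRing (MvPolynomial σ F ⧸ p) L] :
    IntermediateField.adjoin F
      (Set.range fun i => algebraMap (MvPolynomial σ F ⧸ p) L (Ideal.Quotient.mk p (X i))) = ⊤ := by
  set E := IntermediateField.adjoin F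
    (Set.range fun i => algebraMap (MvPolynomial σ F ⧸ p) L (Ideal.Quotient.mk p (X i)))
  have algebraMap_mem (a : MvPolynomial σ F ⧸ p) : algebraMap _ L a ∈ E := by
    obtain ⟨f, rfl⟩ := Ideal.Quotient.mk_surjective a
    rw [← aeval_algebraMap_mk_X]
    refine IntermediateField.algebra_adjoin_le_adjoin F _ ?_
    rw [Algebra.adjoin_range_eq_range_aeval]
    exact ⟨f, rfl⟩
  refine eq_top_iff.2 fun z _ => ?_
  obtain ⟨a, b, -, rfl⟩ := IsFractionRing.div_surjective (A := MvPolynomial σ F ⧸ p) z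
  exact div_mem (algebraMap_mem a) (algebraMap_mem b)

end CoordinateRing

section FunctionField

variable {R : Type u} {F : Type*} [CommRing R] [IsDomain R] [IsNoetherianRing R] [Field F]
  [Algebra R F] [IsFractionRing R F] {σ : Type*} [Finite σ]

theorem exists_irreducible_and_holdsGenerically_isPrime_map {I : Ideal (MvPolynomial σ R)}
    [(I.map (map (algebraMap R F))).IsPrime]
    [Algebra.IsGeometricallyReduced F
      (FractionRing (MvPolynomial σ F ⧸ I.map (map (algebraMap R F))))] :
    ∃ (n : ℕ) (f : MvPolynomial (Fin n) R), Irreducible (map (algebraMap R F) f) ∧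
      HoldsGenerically R fun (k : Type w) _ _ => Irreducible (map (algebraMap R k) f) →
        (I.map (map (algebraMap R k))).IsPrime ∧
        ringKrullDim (MvPolynomial σ k ⧸ I.map (map (algebraMap R k))) =
          ringKrullDim (MvPolynomial σ F ⧸ I.map (map (algebraMap R F))) := by
  set p := I.map (map (algebraMap R F))
  let A := MvPolynomial σ F ⧸ p
  let L := FractionRing A
  have : Algebra.EssFiniteType A L := .of_isLocalization _ (nonZeroDivisors A)
  have : Algebra.EssFiniteType F L := .comp F A L
  obtain ⟨n, x, hn, hx⟩ := exists_trdeg_eq_and_adjoin_range_eq_top F L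
  obtain ⟨f₀, hf₀, ker_x⟩ := exists_ker_aeval_eq_span (Nat.card_fin _) hn hx
  obtain ⟨f, hf⟩ := exists_associated_map_algebraMap R f₀
  have span_eq_ker_x :
      (Ideal.span {f}).map (map (algebraMap R F)) = RingHom.ker (aeval x : _ →ₐ[F] L) := by
    rw [Ideal.map_span, Set.image_singleton, ker_x, Ideal.span_singleton_eq_span_singleton]
    exact hf
  refine ⟨n + 1, f, hf.irreducible_iff.2 hf₀, ?_⟩
  refine (holdsGenerically_isDomainOfTrdeg_iff_of_adjoin_eq_top
    (ker_aeval_algebraMap_mk_X p L).symm span_eq_ker_x (adjoin_range_algebraMap_mk_X p L) hx).mono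
    fun k _ _ hk hfk => ?_
  have dom_k := (hk n).2 <| by
    rw [Ideal.map_span, Set.image_singleton]
    exact isDomainOfTrdeg_quotient_span hfk (Nat.card_fin _)
  have dom_F : IsDomainOfTrdeg F A n :=
    (isDomainOfTrdeg_iff_of_isLocalization (S := L) (le_refl (nonZeroDivisors A)) n).2
      ⟨inferInstance, hn⟩
  exact ⟨(Ideal.Quotient.isDomain_iff_prime _).1 dom_k.isDomain,
    dom_k.ringKrullDim_eq.trans dom_F.ringKrullDim_eq.symm⟩

end FunctionField

section Specialization

variable (K : Type) [Field K] {r s : ℕ}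

/-- The identification of `K[T, Y]` with `K[T][Y]`, which puts the ideals generated by `extHom` and
`specHom` on the same footing: both are extensions of one ideal of `K[T][Y]`. -/
def collectParameters :
    MvPolynomial (Fin r ⊕ Fin s) K →+* MvPolynomial (Fin s) (MvPolynomial (Fin r) K) :=
  eval₂Hom (C.comp C) (Sum.elim (fun i => C (X i)) X)

theorem extHom_eq_comp_collectParameters :
    extHom K r s = (map (algebraMap _ (RatFuncField K (Fin r)))).comp (collectParameters K) := by
  refine MvPolynomial.ringHom_ext (fun a => ?_) ?_
  · simp [extHom, collectParameters]
  · rintro (i | j) <;> simp [extHom, collectParameters]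

theorem specHom_eq_comp_collectParameters (t : Fin r → K) :
    specHom (s := s) K t = (map (eval t)).comp (collectParameters K) := by
  refine MvPolynomial.ringHom_ext (fun a => ?_) ?_
  · simp [specHom, collectParameters]
  · rintro (i | j) <;> simp [specHom, collectParameters]

variable {K} {l : Type*} (P : l → MvPolynomial (Fin r ⊕ Fin s) K)

theorem span_range_extHom :
    Ideal.span (Set.range fun i => extHom K r s (P i)) =
      (Ideal.span (Set.range fun i => collectParameters K (P i))).map
        (map (algebraMap _ (RatFuncField K (Fin r)))) := by
  rw [Ideal.map_span, ← Set.range_comp, extHom_eq_comp_collectParameters]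
  rfl

theorem span_range_specHom (t : Fin r → K) :
    Ideal.span (Set.range fun i => specHom K t (P i)) =
      (Ideal.span (Set.range fun i => collectParameters K (P i))).map (map (eval t)) := by
  rw [Ideal.map_span, ← Set.range_comp, specHom_eq_comp_collectParameters]
  rfl

variable {ι : Type}

theorem polySpecializesTo_map_algebraMap_iff {t : ι → K}
    {f : MvPolynomial (Fin s) (MvPolynomial ι K)} {q : MvPolynomial (Fin s) K} :
    PolySpecializesTo K t (map (algebraMap _ (RatFuncField K ι)) f) q ↔ q = map (eval t) f := by
  constructor
  · intro h
    ext m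
    obtain ⟨a, b, hb, hab, h_eval⟩ := h m
    rw [coeff_map, ← map_mul] at hab
    rw [coeff_map, ← mul_right_inj' hb, h_eval, ← IsFractionRing.injective _ _ hab, map_mul]
  · rintro rfl m
    exact ⟨coeff m f, 1, by simp, by simp [coeff_map], by simp [coeff_map]⟩

theorem isHilbertSubset_setOf_irreducible_map_eval {n : ℕ}
    {f : MvPolynomial (Fin n) (MvPolynomial ι K)}
    (hf : Irreducible (map (algebraMap _ (RatFuncField K ι)) f)) :
    IsHilbertSubset K ι {t | Irreducible (map (eval t) f)} := by
  refine ⟨n, 1, 1, fun _ => map (algebraMap _ _) f, fun _ => 1, fun _ => hf, ⟨0, 0, by simp⟩, ?_⟩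
  simp [polySpecializesTo_map_algebraMap_iff]

theorem IsSepOverBase.isGeometricallyReduced {F A : Type} [Field F] [CommRing A] [Algebra F A]
    (h : IsSepOverBase F A) : Algebra.IsGeometricallyReduced F (FractionRing A) := by
  rw [Algebra.isGeometricallyReduced_field_iff]
  have algebra_eq : ((algebraMap A (FractionRing A)).comp (algebraMap F A)).toAlgebra =
      (inferInstance : Algebra F (FractionRing A)) :=
    Algebra.algebra_ext _ _ fun x => (IsScalarTower.algebraMap_apply F A (FractionRing A) x).symm
  rwa [IsSepOverBase, IsSepExtOfHom, algebra_eq] at h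

end Specialization

/-- Hilbert specialization of parametrized varieties over a Hilbertian
field: if `p̃_T = ⟨P_1,…,P_l⟩ ⊆ K(T)[Y]` is prime with separable residue field extension and
quotient of Krull dimension `d`, then the set of `t ∈ K^r` for which the specialized ideal
`p_t = ⟨P_1(t,Y),…,P_l(t,Y)⟩ ⊆ K[Y]` is prime with quotient of Krull dimension `d`
is Zariski-dense in `K^r`. -/
theorem stmt_0 (K : Type) [Field K] (hK : IsHilbertianField K)
    (r s : ℕ) (hr : 1 ≤ r) (hs : 1 ≤ s) (l : ℕ)
    (P : Fin l → MvPolynomial (Fin r ⊕ Fin s) K)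
    (hprime : (Ideal.span (Set.range fun i => extHom K r s (P i))).IsPrime)
    (hsep : IsSepOverBase (RatFuncField K (Fin r))
      (MvPolynomial (Fin s) (RatFuncField K (Fin r)) ⧸
        Ideal.span (Set.range fun i => extHom K r s (P i))))
    (d : WithBot ℕ∞)
    (hd : ringKrullDim (MvPolynomial (Fin s) (RatFuncField K (Fin r)) ⧸
        Ideal.span (Set.range fun i => extHom K r s (P i))) = d) :
    IsZariskiDense K {t : Fin r → K |
      (Ideal.span (Set.range fun i => specHom K t (P i))).IsPrime ∧
      ringKrullDim (MvPolynomial (Fin s) K ⧸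
        Ideal.span (Set.range fun i => specHom K t (P i))) = d} := by
  intro g hg
  rw [span_range_extHom] at hprime hsep hd
  have := hsep.isGeometricallyReduced
  obtain ⟨n, f, hf, b, hb, fibre_of_irreducible⟩ :=
    exists_irreducible_and_holdsGenerically_isPrime_map (F := RatFuncField K (Fin r))
      (I := Ideal.span (Set.range fun i => collectParameters K (P i)))
  obtain ⟨t, ht, hgb⟩ :=
    hK r hr _ (isHilbertSubset_setOf_irreducible_map_eval hf) (g * b) (mul_ne_zero hg hb)
  rw [map_mul, mul_ne_zero_iff] at hgb
  refine ⟨t, ?_, hgb.1⟩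
  let := (eval t).toAlgebra
  rw [Set.mem_ofPred, span_range_specHom, ← hd]
  exact fibre_of_irreducible K hgb.2 ht

end
end

section
/- Let R be an integral domain with fraction field F, and let A be an integral domain containing R as a subring that is a finitely generated R-algebra; let L = Frac(A) and d = trdeg_F(L). Then there exist a nonzero element c ∈ R and elements z_1,…,z_d ∈ A[c⁻¹] that are algebraically independent over R[c⁻¹] such that A[c⁻¹] is a finitely generated module over its subring R[c⁻¹][z_1,…,z_d]. Moreover, if L is a separable extension of F, then z_1,…,z_d can be chosen so that L is a separable algebraic extension of F(z_1,…,z_d) (i.e. z_1,…,z_d is a separating transcendence basis of L/F). -/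
open MvPolynomial

noncomputable section

/-- The conclusion of the Noether Normalization Lemma for `c : R` and `z : Fin d → L`
(all objects viewed inside `L = Frac A`): each `z i` lies in `A[c⁻¹]`, the `z i` are
algebraically independent over `R[c⁻¹]`, and `A[c⁻¹]` is a finitely generated module over
its subring `R[c⁻¹][z]`. -/
def NNConclusion (R A L : Type) [CommRing R] [CommRing A] [Field L]
    [Algebra R A] [Algebra A L] [Algebra R L] {d : ℕ} (c : R) (z : Fin d → L) : Prop :=
  (∀ i, z i ∈ Algebra.adjoin R (Set.range (algebraMap A L) ∪ {(algebraMap R L c)⁻¹})) ∧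
  AlgebraicIndependent ↥(Algebra.adjoin R ({(algebraMap R L c)⁻¹} : Set L)) z ∧
  ∃ (k : ℕ) (g : Fin k → L),
    (∀ j, g j ∈ Algebra.adjoin R (Set.range (algebraMap A L) ∪ {(algebraMap R L c)⁻¹})) ∧
    ∀ a ∈ Algebra.adjoin R (Set.range (algebraMap A L) ∪ {(algebraMap R L c)⁻¹}),
      a ∈ Submodule.span
        ↥(Algebra.adjoin ↥(Algebra.adjoin R ({(algebraMap R L c)⁻¹} : Set L)) (Set.range z))
        (Set.range g)

/-!
Put `B = F[A] ⊆ L`, let `y` be a Noether normalization of `B` over `F`, and in characteristic `p`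
let `w` be a separating transcendence basis of a separable `L/F`. Choose `b i ≠ 0` with
`w i * b i ^ p ∈ B` and put `z i = w i * b i ^ p + y i ^ e` with `p ∣ e` and `e` large. Over the
field `F(z)` one has `0 = d (z i) = b i ^ p • d (w i)`, so all differentials of `L/F(z)` vanish and
`L/F(z)` is separable. A valuation of `L/F` that is nonnegative on `z` is nonnegative on `y`: at a
worst pole among the `y j`, the term `y j ^ e` would dominate `w j * b j ^ p`, whose pole order is
bounded because it is integral over `F[y]`. Hence `B` is integral over `F[z]`. Finally, only
finitely many elements of `F` occur in the expression of `z` through `A` and in the integral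
equations of the generators of `A`; inverting a common denominator `c` replaces `F` by `R[c⁻¹]`.
-/

section Valuation

theorem isIntegral_of_forall_mem_valuationSubring {R K : Type*} [CommRing R] [Field K]
    [Algebra R K] (S : Subalgebra R K) {x : K}
    (h : ∀ V : ValuationSubring K, (S : Set K) ⊆ V → x ∈ V) :
    IsIntegral S x := by
  have hx : x ∈ (integralClosure (Subring.closure (S : Set K)) K).toSubring := by
    rw [← iInf_valuationSubring_superset, Subring.mem_iInf]
    exact fun V ↦ h V.1 V.2
  have hS : Subring.closure (S : Set K) = S.toSubring := Subring.closure_eq S.toSubring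
  exact IsIntegral.map_of_comp_eq (Subring.inclusion hS.le : _ →+* S) (RingHom.id K) rfl hx

theorem valuation_le_of_monic_of_eval_eq_zero {A Γ₀ : Type*} [CommRing A]
    [LinearOrderedCommGroupWithZero Γ₀] (v : Valuation A Γ₀) {p : Polynomial A} (hp : p.Monic)
    {x : A} (hx : p.eval x = 0) {γ : Γ₀} (hγ : 1 ≤ γ)
    (hcoeff : ∀ k < p.natDegree, v (p.coeff k) ≤ γ) : v x ≤ γ := by
  by_contra! hlt
  have one_lt : 1 < v x := hγ.trans_lt hlt
  have pos : 0 < v x := zero_lt_one.trans one_lt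
  have hxn : x ^ p.natDegree = -∑ k ∈ Finset.range p.natDegree, p.coeff k * x ^ k := by
    rw [Polynomial.eval_eq_sum_range, Finset.sum_range_succ, hp.coeff_natDegree, one_mul] at hx
    exact eq_neg_of_add_eq_zero_right hx
  have hterm : ∀ k ∈ Finset.range p.natDegree, v (p.coeff k * x ^ k) < v x ^ p.natDegree := by
    intro k hk
    rw [Finset.mem_range] at hk
    calc v (p.coeff k * x ^ k) = v (p.coeff k) * v x ^ k := by rw [map_mul, map_pow]
      _ < v x * v x ^ k := mul_lt_mul_of_pos_right ((hcoeff k hk).trans_lt hlt) (pow_pos pos k)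
      _ = v x ^ (k + 1) := (pow_succ' _ _).symm
      _ ≤ v x ^ p.natDegree := pow_le_pow_right₀ one_lt.le hk
  have hsum := v.map_sum_lt (pow_ne_zero _ pos.ne') hterm
  rw [← v.map_neg, ← hxn, map_pow] at hsum
  exact lt_irrefl _ hsum

variable (F : Type*) {L ι : Type*} [Field F] [Field L] [Algebra F L]

/-- The elements `w` of `L` of polynomial growth with respect to the family `y`: there is an
exponent `n` such that `v(w) ≤ γ ^ n` for every valuation `v` of `L` that is trivial on `F` and
every bound `γ ≥ 1` for the values `v(y i)`.  The exponent does not depend on `v`. -/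
def polynomialGrowth (y : ι → L) : Subalgebra F L where
  carrier := {w | ∃ n : ℕ, ∀ V : ValuationSubring L, Set.range (algebraMap F L) ⊆ V →
    ∀ γ : V.ValueGroup, 1 ≤ γ → (∀ i, V.valuation (y i) ≤ γ) → V.valuation w ≤ γ ^ n}
  add_mem' := by
    rintro a b ⟨m, hm⟩ ⟨n, hn⟩
    refine ⟨m + n, fun V hV γ hγ hy ↦ (V.valuation.map_add a b).trans (max_le ?_ ?_)⟩
    · exact (hm V hV γ hγ hy).trans (pow_le_pow_right₀ hγ (Nat.le_add_right m n))
    · exact (hn V hV γ hγ hy).trans (pow_le_pow_right₀ hγ (Nat.le_add_left n m))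
  mul_mem' := by
    rintro a b ⟨m, hm⟩ ⟨n, hn⟩
    refine ⟨m + n, fun V hV γ hγ hy ↦ ?_⟩
    rw [map_mul, pow_add]
    exact mul_le_mul' (hm V hV γ hγ hy) (hn V hV γ hγ hy)
  algebraMap_mem' a :=
    ⟨0, fun V hV γ _ _ ↦ by simpa using (V.valuation_le_one_iff _).mpr (hV ⟨a, rfl⟩)⟩

variable {F}

theorem adjoin_range_le_polynomialGrowth (y : ι → L) :
    Algebra.adjoin F (Set.range y) ≤ polynomialGrowth F y := by
  rw [Algebra.adjoin_le_iff]
  rintro _ ⟨i, rfl⟩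
  exact ⟨1, fun V _ γ _ hy ↦ by simpa using hy i⟩

theorem mem_polynomialGrowth_of_isIntegral {y : ι → L} {w : L}
    (hw : IsIntegral (Algebra.adjoin F (Set.range y)) w) : w ∈ polynomialGrowth F y := by
  obtain ⟨p, hp, hpw⟩ := hw
  choose n hn using fun k ↦ adjoin_range_le_polynomialGrowth y (p.coeff k).2
  refine ⟨∑ k ∈ Finset.range p.natDegree, n k, fun V hV γ hγ hy ↦ ?_⟩
  refine valuation_le_of_monic_of_eval_eq_zero V.valuation (hp.map (algebraMap _ L))
    (by rwa [Polynomial.eval_map]) (one_le_pow₀ hγ) fun k hk ↦ ?_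
  rw [hp.natDegree_map] at hk
  rw [Polynomial.coeff_map]
  exact (hn k V hV γ hγ hy).trans <| pow_le_pow_right₀ hγ <|
    Finset.single_le_sum (fun _ _ ↦ Nat.zero_le _) (Finset.mem_range.mpr hk)

-- If some `v (y i) > 1` and `v (y j)` is maximal, then `v (w j + y j ^ e) = v (y j) ^ e > 1`.
theorem exists_forall_mem_valuationSubring_of_add_pow_mem [Finite ι] {y w : ι → L}
    (hw : ∀ i, w i ∈ polynomialGrowth F y) :
    ∃ N : ℕ, ∀ e > N, ∀ V : ValuationSubring L, Set.range (algebraMap F L) ⊆ V →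
      (∀ i, w i + y i ^ e ∈ V) → ∀ i, y i ∈ V := by
  cases nonempty_fintype ι
  choose n hn using hw
  refine ⟨∑ i, n i, fun e he V hV hz i ↦ ?_⟩
  have : Nonempty ι := ⟨i⟩
  obtain ⟨j, hj⟩ := Finite.exists_max fun j ↦ V.valuation (y j)
  rw [← V.valuation_le_one_iff]
  refine (hj i).trans (not_lt.mp fun hlt ↦ ?_)
  have hne : n j < e :=
    (Finset.single_le_sum (fun _ _ ↦ Nat.zero_le _) (Finset.mem_univ j)).trans_lt he
  have hw_lt : V.valuation (w j) < V.valuation (y j ^ e) := by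
    rw [map_pow]
    exact (hn j V hV _ hlt.le hj).trans_lt (pow_lt_pow_right₀ hlt hne)
  have hz_eq : V.valuation (w j + y j ^ e) = V.valuation (y j) ^ e := by
    rw [V.valuation.map_add_eq_of_lt_right hw_lt, map_pow]
  exact ((V.valuation_le_one_iff _).mpr (hz j)).not_gt
    (hz_eq ▸ one_lt_pow₀ hlt (Nat.ne_zero_of_lt hne))

theorem exists_forall_isIntegral_adjoin_add_pow [Finite ι] {y w : ι → L}
    (hw : ∀ i, IsIntegral (Algebra.adjoin F (Set.range y)) (w i)) :
    ∃ N : ℕ, ∀ e > N, ∀ x : L, IsIntegral (Algebra.adjoin F (Set.range y)) x →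
      IsIntegral (Algebra.adjoin F (Set.range fun i ↦ w i + y i ^ e)) x := by
  obtain ⟨N, hN⟩ := exists_forall_mem_valuationSubring_of_add_pow_mem fun i ↦
    mem_polynomialGrowth_of_isIntegral (hw i)
  refine ⟨N, fun e he x hx ↦ isIntegral_of_forall_mem_valuationSubring _ fun V hV ↦ ?_⟩
  have hFV : Set.range (algebraMap F L) ⊆ V := by
    rintro _ ⟨a, rfl⟩
    exact hV (Subalgebra.algebraMap_mem _ a)
  have hyV := hN e he V hFV fun i ↦ hV (Algebra.subset_adjoin ⟨i, rfl⟩)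
  obtain ⟨n, hn⟩ := mem_polynomialGrowth_of_isIntegral hx
  rw [← V.valuation_le_one_iff]
  simpa using hn V hFV 1 le_rfl fun i ↦ (V.valuation_le_one_iff _).mpr (hyV i)

end Valuation

section Separable

variable {F L : Type*} [Field F] [Field L] [Algebra F L]

theorem derivation_eq_zero_of_isSeparable {M : Type*} [AddCommGroup M] [Module F M] [Module L M]
    [IsScalarTower F L M] [Algebra.IsSeparable F L] (D : Derivation F L M) : D = 0 := by
  have := Algebra.FormallyUnramified.of_isSeparable F L
  ext x
  rw [← D.liftKaehlerDifferential_comp_D, Subsingleton.elim (KaehlerDifferential.D F L x) 0,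
    map_zero, Derivation.zero_apply]

theorem derivation_eq_zero_of_isSeparable_adjoin {M : Type*} [AddCommGroup M] [Module F M]
    [Module L M] {s : Set L}
    [Algebra.IsSeparable (IntermediateField.adjoin F s) L] (D : Derivation F L M)
    (hD : ∀ x ∈ s, D x = 0) : D = 0 := by
  have hE : ∀ x ∈ IntermediateField.adjoin F s, D x = 0 := by
    intro x hx
    induction hx using IntermediateField.adjoin_induction with
    | mem x hx => exact hD x hx
    | algebraMap a => exact D.map_algebraMap a
    | add x y _ _ hx hy => rw [map_add, hx, hy, add_zero]
    | inv x _ hx => rw [Derivation.leibniz_inv, hx, smul_zero]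
    | mul x y _ _ hx hy => rw [Derivation.leibniz, hx, hy, smul_zero, smul_zero, add_zero]
  let DE : Derivation (IntermediateField.adjoin F s) L M :=
    { D with
      map_smul' := fun a x ↦ by simp [IntermediateField.smul_def, hE _ a.2] }
  have := derivation_eq_zero_of_isSeparable DE
  ext x
  exact congr($this x)

theorem isSeparable_of_forall_D_eq_zero [Algebra.EssFiniteType F L] {s : Set L}
    [Algebra.IsSeparable (IntermediateField.adjoin F s) L] (K : IntermediateField F L)
    (hs : ∀ x ∈ s, KaehlerDifferential.D K L x = 0) : Algebra.IsSeparable K L := by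
  have := Algebra.EssFiniteType.of_comp F K L
  have hD := derivation_eq_zero_of_isSeparable_adjoin
    ((KaehlerDifferential.D K L).restrictScalars F) hs
  rw [← Algebra.FormallyUnramified.iff_isSeparable]
  refine ⟨?_⟩
  rw [← Submodule.subsingleton_iff L, ← subsingleton_iff_bot_eq_top,
    ← KaehlerDifferential.span_range_derivation, eq_comm, Submodule.span_eq_bot]
  rintro _ ⟨x, rfl⟩
  exact congr($hD x)

theorem derivation_pow_eq_zero {R A M : Type*} [CommRing R] [CommRing A] [Algebra R A]
    [AddCommGroup M] [Module R M] [Module A M] (D : Derivation R A M) (p : ℕ) [CharP A p] {n : ℕ}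
    (hn : p ∣ n) (x : A) : D (x ^ n) = 0 := by
  rw [Derivation.leibniz_pow, ← Nat.cast_smul_eq_nsmul A, (CharP.cast_eq_zero_iff A p n).mpr hn,
    zero_smul]

theorem isSeparable_adjoin_mul_pow_add_pow [Algebra.EssFiniteType F L] (p : ℕ) [CharP L p]
    {ι : Type*} {w b : ι → L} (y : ι → L) (hb : ∀ i, b i ≠ 0) {e : ℕ} (he : p ∣ e)
    [Algebra.IsSeparable (IntermediateField.adjoin F (Set.range w)) L] :
    Algebra.IsSeparable
      (IntermediateField.adjoin F (Set.range fun i ↦ w i * b i ^ p + y i ^ e)) L := by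
  set K := IntermediateField.adjoin F (Set.range fun i ↦ w i * b i ^ p + y i ^ e)
  refine isSeparable_of_forall_D_eq_zero (s := Set.range w) K ?_
  rintro _ ⟨i, rfl⟩
  set D := KaehlerDifferential.D K L
  have hz : w i * b i ^ p + y i ^ e ∈ K := IntermediateField.subset_adjoin F _ ⟨i, rfl⟩
  have hDz : b i ^ p • D (w i) = 0 := by
    simpa [derivation_pow_eq_zero D p dvd_rfl, derivation_pow_eq_zero D p he] using
      D.map_algebraMap (⟨_, hz⟩ : K)
  exact (smul_eq_zero.mp hDz).resolve_left (pow_ne_zero p (hb i))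

open scoped TensorProduct in
theorem linearIndependent_pow_of_isGeometricallyReduced {A : Type*} [CommRing A] [Algebra F A]
    [Nontrivial A] [Algebra.IsGeometricallyReduced F A] (p : ℕ) [Fact p.Prime] [CharP F p]
    {ι : Type*} {v : ι → A} (hv : LinearIndependent F v) :
    LinearIndependent F (fun i ↦ v i ^ p) := by
  have : CharP (AlgebraicClosure F ⊗[F] A) p :=
    charP_of_injective_algebraMap (algebraMap F _).injective p
  let incl : A →ₐ[F] AlgebraicClosure F ⊗[F] A := Algebra.TensorProduct.includeRight
  have hincl : LinearIndependent (AlgebraicClosure F) (incl ∘ v) :=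
    Module.Flat.linearIndependent_one_tmul hv
  have hfrob : LinearIndependent (AlgebraicClosure F) (frobenius _ p ∘ incl ∘ v) := by
    refine hincl.map_of_injective_injective (frobeniusEquiv (AlgebraicClosure F) p).symm
      (frobenius _ p).toAddMonoidHom (by simp) (fun a ha ↦ eq_zero_of_pow_eq_zero ha) fun r a ↦ ?_
    change (_ • a) ^ p = r • a ^ p
    rw [smul_pow, frobeniusEquiv_symm_pow_p]
  have hpow : frobenius _ p ∘ incl ∘ v = incl.toLinearMap ∘ fun i ↦ v i ^ p :=
    funext fun i ↦ (map_pow incl (v i) p).symm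
  rw [hpow] at hfrob
  exact .of_comp _ (hfrob.restrict_scalars' F)

end Separable

section NoetherNormalization

/-- The family `z` is a Noether normalization of the subalgebra `B` of an `R`-algebra `A`: it
consists of algebraically independent elements of `B` over whose polynomial algebra `B` is
integral.  Elements of `B` are kept as elements of `A`, so that `R`, `B` and `z` can be varied
inside a fixed `A`. -/
structure IsNoetherNormalization {R A ι : Type*} [CommRing R] [CommRing A] [Algebra R A]
    (B : Subalgebra R A) (z : ι → A) : Prop where
  mem : ∀ i, z i ∈ B
  algebraicIndependent : AlgebraicIndependent R z
  isIntegral : ∀ x ∈ B, IsIntegral (Algebra.adjoin R (Set.range z)) x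

variable {F L : Type*} [Field F] [Field L] [Algebra F L] {B : Subalgebra F L}

theorem exists_isNoetherNormalization {A : Type*} [CommRing A] [Nontrivial A] [Algebra F A]
    {B : Subalgebra F A} (hB : B.FG) : ∃ (n : ℕ) (z : Fin n → A), IsNoetherNormalization B z := by
  have : Algebra.FiniteType F B := B.fg_iff_finiteType.mp hB
  obtain ⟨n, g, hg_inj, hg_int⟩ := exists_integral_inj_algHom_of_fg F B
  let z : Fin n → A := fun i ↦ g (X i)
  have hz : B.val.comp g = aeval z := by ext i; simp [z]
  refine ⟨n, z, fun i ↦ (g (X i)).2, ?_, fun x hx ↦ ?_⟩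
  · rw [AlgebraicIndependent, ← hz]
    exact Subtype.val_injective.comp hg_inj
  · algebraize [g.toRingHom]
    let φ : MvPolynomial (Fin n) F →ₐ[F] Algebra.adjoin F (Set.range z) :=
      (aeval z).codRestrict _ fun p ↦ by
        rw [Algebra.adjoin_range_eq_range_aeval]
        exact ⟨p, rfl⟩
    exact IsIntegral.map_of_comp_eq φ.toRingHom B.val.toRingHom
      congr(($hz.symm : MvPolynomial (Fin n) F →+* A)) (hg_int ⟨x, hx⟩)

theorem isAlgebraic_of_forall_isIntegral {S A K : Type*} [CommRing S] [IsDomain S] [CommRing A]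
    [Field K] [Algebra S K] [Algebra A K] [IsFractionRing A K]
    (hA : ∀ a : A, IsIntegral S (algebraMap A K a)) : Algebra.IsAlgebraic S K := by
  refine ⟨fun x ↦ ?_⟩
  obtain ⟨a, b, -, rfl⟩ := IsFractionRing.div_surjective (A := A) x
  rw [div_eq_mul_inv]
  exact (hA a).isAlgebraic.mul (hA b).isAlgebraic.inv

namespace IsNoetherNormalization

theorem isTranscendenceBasis [IsFractionRing B L] {ι : Type*} {z : ι → L}
    (hz : IsNoetherNormalization B z) : IsTranscendenceBasis F z :=
  hz.algebraicIndependent.isTranscendenceBasis_iff_isAlgebraic.mpr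
    (isAlgebraic_of_forall_isIntegral fun a : B ↦ hz.isIntegral a a.2)

theorem of_isIntegral [IsFractionRing B L] {d : ℕ} (hd : Algebra.trdeg F L = d) {z : Fin d → L}
    (hmem : ∀ i, z i ∈ B) (hint : ∀ x ∈ B, IsIntegral (Algebra.adjoin F (Set.range z)) x) :
    IsNoetherNormalization B z := by
  have := isAlgebraic_of_forall_isIntegral fun a : B ↦ hint a a.2
  have hz : IsTranscendenceBasis F z :=
    Algebra.IsAlgebraic.isTranscendenceBasis_of_lift_le_trdeg_of_finite F z (by simp [hd])
  exact ⟨hmem, hz.1, hint⟩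

end IsNoetherNormalization

theorem exists_isNoetherNormalization_of_trdeg_eq [IsFractionRing B L] (hB : B.FG) {d : ℕ}
    (hd : Algebra.trdeg F L = d) : ∃ z : Fin d → L, IsNoetherNormalization B z := by
  obtain ⟨n, z, hz⟩ := exists_isNoetherNormalization hB
  obtain rfl : n = d := by simpa [hd] using hz.isTranscendenceBasis.lift_cardinalMk_eq_trdeg
  exact ⟨z, hz⟩

theorem exists_isSeparable_adjoin_range_of_charP [Algebra.EssFiniteType F L]
    [Algebra.IsGeometricallyReduced F L] (p : ℕ) [Fact p.Prime] [CharP F p] {d : ℕ}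
    (hd : Algebra.trdeg F L = d) :
    ∃ w : Fin d → L, Algebra.IsSeparable (IntermediateField.adjoin F (Set.range w)) L := by
  obtain ⟨t, ht, hsep⟩ :=
    exists_isTranscendenceBasis_and_isSeparable_of_linearIndepOn_pow_of_essFiniteType
      (k := F) (K := L) p Fact.out fun s hs ↦ linearIndependent_pow_of_isGeometricallyReduced p hs
  have hcard : t.card = d := by simpa [hd] using ht.cardinalMk_eq_trdeg
  let w : Fin d → L := fun i ↦ (t.equivFinOfCardEq hcard).symm i
  have hw : Set.range w = t :=
    (EquivLike.range_comp Subtype.val (t.equivFinOfCardEq hcard).symm).trans Subtype.range_coe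
  exact ⟨w, hw ▸ hsep⟩

theorem exists_forall_mul_pow_mem [IsFractionRing B L] {ι : Type*} (w : ι → L) {n : ℕ}
    (hn : n ≠ 0) : ∃ b : ι → L, ∀ i, b i ≠ 0 ∧ w i * b i ^ n ∈ B := by
  have (i : ι) : ∃ b : L, b ≠ 0 ∧ w i * b ^ n ∈ B := by
    obtain ⟨a, b, hb, hab⟩ := IsFractionRing.div_surjective (A := B) (w i)
    have hb' : (b : L) ≠ 0 := by simpa using nonZeroDivisors.ne_zero hb
    refine ⟨b, hb', ?_⟩
    obtain ⟨k, rfl⟩ := Nat.exists_eq_succ_of_ne_zero hn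
    rw [pow_succ', ← mul_assoc, ← hab]
    exact mul_mem (by simp [hb']) (pow_mem b.2 k)
  choose b hb using this
  exact ⟨b, hb⟩

theorem exists_isNoetherNormalization_isSeparable_of_charP [IsFractionRing B L]
    [Algebra.IsGeometricallyReduced F L] (p : ℕ) [Fact p.Prime] [CharP F p] (hB : B.FG) {d : ℕ}
    (hd : Algebra.trdeg F L = d) :
    ∃ z : Fin d → L, IsNoetherNormalization B z ∧
      Algebra.IsSeparable (IntermediateField.adjoin F (Set.range z)) L := by
  have hp : p ≠ 0 := (Fact.out : p.Prime).ne_zero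
  have : Algebra.FiniteType F B := B.fg_iff_finiteType.mp hB
  have : Algebra.EssFiniteType B L := .of_isLocalization L (nonZeroDivisors B)
  have : Algebra.EssFiniteType F L := .comp F B L
  have : CharP L p := charP_of_injective_algebraMap (algebraMap F L).injective p
  obtain ⟨y, hy⟩ := exists_isNoetherNormalization_of_trdeg_eq hB hd
  obtain ⟨w, hw⟩ := exists_isSeparable_adjoin_range_of_charP p hd
  obtain ⟨b, hb⟩ := exists_forall_mul_pow_mem (B := B) w hp
  obtain ⟨N, hN⟩ :=
    exists_forall_isIntegral_adjoin_add_pow fun i ↦ hy.isIntegral (w i * b i ^ p) (hb i).2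
  have hlt : N < p * (N + 1) := Nat.lt_of_lt_of_le N.lt_succ_self (Nat.le_mul_of_pos_left _ hp.pos)
  refine ⟨fun i ↦ w i * b i ^ p + y i ^ (p * (N + 1)), .of_isIntegral hd ?_ fun x hx ↦ ?_, ?_⟩
  · exact fun i ↦ add_mem (hb i).2 (pow_mem (hy.mem i) _)
  · exact hN _ hlt x (hy.isIntegral x hx)
  · exact isSeparable_adjoin_mul_pow_add_pow p y (fun i ↦ (hb i).1) (dvd_mul_right p _)

theorem exists_isNoetherNormalization_isSeparable [IsFractionRing B L]
    [Algebra.IsGeometricallyReduced F L] (hB : B.FG) {d : ℕ} (hd : Algebra.trdeg F L = d) :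
    ∃ z : Fin d → L, IsNoetherNormalization B z ∧
      Algebra.IsSeparable (IntermediateField.adjoin F (Set.range z)) L := by
  obtain hF | ⟨p, hp, hpF⟩ := CharP.exists' F
  · obtain ⟨z, hz⟩ := exists_isNoetherNormalization_of_trdeg_eq hB hd
    have := hz.isTranscendenceBasis.isAlgebraic_field
    exact ⟨z, hz, inferInstance⟩
  · exact exists_isNoetherNormalization_isSeparable_of_charP p hB hd

end NoetherNormalization

section Spreading

variable {R A F L : Type*} [CommRing R] [IsDomain R] [Field F] [Algebra R F] [IsFractionRing R F]
  [Field L] [Algebra R L] [Algebra F L] [IsScalarTower R F L]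

theorem inv_algebraMap_mem_of_dvd {R L : Type*} [CommRing R] [Field L] [Algebra R L]
    [FaithfulSMul R L] {S : Subalgebra R L} {r c : R} (hc : c ≠ 0) (hrc : r ∣ c)
    (hS : (algebraMap R L c)⁻¹ ∈ S) : (algebraMap R L r)⁻¹ ∈ S := by
  obtain ⟨k, rfl⟩ := hrc
  have hk : algebraMap R L k ≠ 0 := by simpa using right_ne_zero_of_mul hc
  rw [← mul_inv_cancel_left₀ hk (algebraMap R L r)⁻¹, ← mul_inv_rev, ← map_mul]
  exact mul_mem (S.algebraMap_mem k) hS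

/-- A property `P` of the `R`-subalgebras of a field `L` spreads out if it holds for all
subalgebras in which some fixed nonzero element of `R` is invertible.  It is meant for `R ⊆ L`;
then finitely many such properties can be achieved simultaneously. -/
def SpreadsOut {R L : Type*} [CommRing R] [Field L] [Algebra R L]
    (P : Subalgebra R L → Prop) : Prop :=
  ∃ r : R, r ≠ 0 ∧ ∀ S : Subalgebra R L, (algebraMap R L r)⁻¹ ∈ S → P S

namespace SpreadsOut

variable {R L ι : Type*} [CommRing R] [IsDomain R] [Field L] [Algebra R L] [FaithfulSMul R L]

theorem and {P Q : Subalgebra R L → Prop} (hP : SpreadsOut P) (hQ : SpreadsOut Q) :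
    SpreadsOut fun S ↦ P S ∧ Q S := by
  obtain ⟨r, hr, hP⟩ := hP
  obtain ⟨q, hq, hQ⟩ := hQ
  have hrq : r * q ≠ 0 := mul_ne_zero hr hq
  exact ⟨r * q, hrq, fun S hS ↦
    ⟨hP S (inv_algebraMap_mem_of_dvd hrq (dvd_mul_right r q) hS),
      hQ S (inv_algebraMap_mem_of_dvd hrq (dvd_mul_left q r) hS)⟩⟩

theorem forall_of_finite [Finite ι] {P : ι → Subalgebra R L → Prop}
    (hP : ∀ i, SpreadsOut (P i)) : SpreadsOut fun S ↦ ∀ i, P i S := by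
  cases nonempty_fintype ι
  choose r hr hP using hP
  have hprod : ∏ i, r i ≠ 0 := Finset.prod_ne_zero_iff.mpr fun i _ ↦ hr i
  exact ⟨∏ i, r i, hprod, fun S hS i ↦ hP i S <|
    inv_algebraMap_mem_of_dvd hprod (Finset.dvd_prod_of_mem r (Finset.mem_univ i)) hS⟩

end SpreadsOut

theorem spreadsOut_mem_of_mem_adjoin {s : Set L} {x : L} (hx : x ∈ Algebra.adjoin F s) :
    SpreadsOut fun S : Subalgebra R L ↦ s ⊆ S → x ∈ S := by
  have := FaithfulSMul.trans R F L
  obtain ⟨⟨r, hr⟩, hrx⟩ :=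
    multiple_mem_adjoin_of_mem_localization_adjoin (nonZeroDivisors R) F s x hx
  have hr0 : r ≠ 0 := nonZeroDivisors.ne_zero hr
  have hrL : algebraMap R L r ≠ 0 := by simpa using hr0
  refine ⟨r, hr0, fun S hS hs ↦ ?_⟩
  rw [← inv_mul_cancel_left₀ hrL x, ← Algebra.smul_def]
  exact mul_mem hS (Algebra.adjoin_le hs hrx)

theorem isIntegral_of_forall_coeff_mem {R L : Type*} [CommRing R] [CommRing L] [Algebra R L]
    (S : Subalgebra R L) {p : Polynomial L} (hp : p.Monic) (hS : ∀ k ∈ p.support, p.coeff k ∈ S)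
    {x : L} (hx : p.eval x = 0) : IsIntegral S x := by
  have hp' : (p.coeffs : Set L) ⊆ S.toSubring := by
    intro a ha
    obtain ⟨k, hk, rfl⟩ := Polynomial.mem_coeffs_iff.mp ha
    exact hS k hk
  refine ⟨p.toSubring S.toSubring hp', (p.monic_toSubring _ hp').mpr hp, ?_⟩
  rw [← Polynomial.eval_map]
  exact (congrArg (Polynomial.eval x) (p.map_toSubring _ hp')).trans hx

theorem spreadsOut_isIntegral_of_isIntegral_adjoin {s : Set L} {x : L}
    (hx : IsIntegral (Algebra.adjoin F s) x) :
    SpreadsOut fun S : Subalgebra R L ↦ s ⊆ S → IsIntegral S x := by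
  have := FaithfulSMul.trans R F L
  obtain ⟨p, hp, hpx⟩ := hx
  have hcoeff : SpreadsOut fun S : Subalgebra R L ↦
      ∀ k : p.support, s ⊆ S → (p.coeff k : L) ∈ S :=
    .forall_of_finite fun k ↦ spreadsOut_mem_of_mem_adjoin (p.coeff k).2
  obtain ⟨r, hr, hcoeff⟩ := hcoeff
  refine ⟨r, hr, fun S hS hs ↦ ?_⟩
  refine isIntegral_of_forall_coeff_mem S (hp.map (algebraMap _ L)) (fun k hk ↦ ?_)
    ((p.eval_map _ x).trans hpx)
  rw [Polynomial.coeff_map]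
  exact hcoeff S hS ⟨k, Polynomial.support_map_subset _ p hk⟩ hs

theorem algebraicIndependent_subalgebra_of_le_range {R F L ι : Type*} [CommRing R] [Field F]
    [CommRing L] [Nontrivial L] [Algebra R F] [Algebra R L] [Algebra F L] [IsScalarTower R F L]
    {K : Subalgebra R L} (hK : K ≤ (IsScalarTower.toAlgHom R F L).range) {z : ι → L}
    (hz : AlgebraicIndependent F z) : AlgebraicIndependent K z := by
  let e := AlgEquiv.ofInjectiveField (IsScalarTower.toAlgHom R F L)
  let f : K →ₐ[R] F := e.symm.toAlgHom.comp (Subalgebra.inclusion hK)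
  have hf (a : K) : algebraMap F L (f a) = a :=
    congrArg Subtype.val (e.apply_symm_apply (Subalgebra.inclusion hK a))
  exact AlgebraicIndependent.of_ringHom_of_comp_eq (B := L) f.toRingHom (RingHom.id L) hz
    (e.symm.injective.comp (Subalgebra.inclusion_injective hK)) (RingHom.ext hf)

theorem mem_adjoin_adjoin_adjoin_iff {R L : Type*} [CommRing R] [CommRing L] [Algebra R L]
    {s t u : Set L} {x : L} :
    x ∈ Algebra.adjoin (Algebra.adjoin (Algebra.adjoin R s) t) u ↔
      x ∈ Algebra.adjoin R (s ∪ (t ∪ u)) := by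
  rw [Algebra.adjoin_union_eq_adjoin_adjoin, Subalgebra.mem_restrictScalars,
    Algebra.adjoin_union_eq_adjoin_adjoin, Subalgebra.mem_restrictScalars]

theorem exists_fin_span_eq_adjoin {R L : Type*} [CommRing R] [CommRing L] [Algebra R L]
    {s t u : Set L} (hu : u.Finite)
    (hint : ∀ x ∈ u, IsIntegral (Algebra.adjoin (Algebra.adjoin R s) t) x) :
    ∃ (k : ℕ) (g : Fin k → L),
      (Submodule.span (Algebra.adjoin (Algebra.adjoin R s) t) (Set.range g) : Set L) =
        Algebra.adjoin R (s ∪ (t ∪ u)) := by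
  obtain ⟨k, g, hg⟩ := Submodule.fg_iff_exists_fin_generating_family.mp
    (fg_adjoin_of_finite hu hint)
  refine ⟨k, g, Set.ext fun x ↦ ?_⟩
  rw [hg]
  exact mem_adjoin_adjoin_adjoin_iff

theorem coe_adjoin_algebraMap_image {R A L : Type*} [CommRing R] [CommRing A] [CommRing L]
    [Algebra R A] [Algebra A L] [Algebra R L] [IsScalarTower R A L] {t : Set A}
    (ht : Algebra.adjoin R t = ⊤) :
    (Algebra.adjoin R (algebraMap A L '' t) : Set L) = Set.range (algebraMap A L) := by
  have := Algebra.adjoin_image R (IsScalarTower.toAlgHom R A L) t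
  rw [ht, Algebra.map_top] at this
  exact congrArg SetLike.coe this

theorem fg_adjoin_range_algebraMap (R : Type*) {A F L : Type*} [CommRing R] [CommRing A]
    [CommRing F] [CommRing L] [Algebra R A] [Algebra R F] [Algebra R L] [Algebra A L] [Algebra F L]
    [IsScalarTower R A L] [IsScalarTower R F L] [hA : Algebra.FiniteType R A] :
    (Algebra.adjoin F (Set.range (algebraMap A L))).FG := by
  classical
  obtain ⟨t, ht⟩ := hA.out
  refine ⟨t.image (algebraMap A L), ?_⟩
  rw [← coe_adjoin_algebraMap_image ht, Algebra.adjoin_adjoin_of_tower, Finset.coe_image]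

theorem isFractionRing_adjoin_range_algebraMap [CommRing A] [Algebra A L]
    [IsFractionRing A L] : IsFractionRing (Algebra.adjoin F (Set.range (algebraMap A L))) L :=
  .of_field _ _ fun x ↦ by
    obtain ⟨a, b, -, rfl⟩ := IsFractionRing.div_surjective (A := A) x
    exact ⟨⟨_, Algebra.subset_adjoin ⟨a, rfl⟩⟩, ⟨_, Algebra.subset_adjoin ⟨b, rfl⟩⟩, rfl⟩

end Spreading

section NNConclusion

variable {R A L : Type} [CommRing R] [CommRing A] [Algebra R A] [Field L] [Algebra A L]
  [Algebra R L] [IsScalarTower R A L] {d : ℕ} {z : Fin d → L}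

theorem nnConclusion_of_isIntegral {c : R} {t : Set A} (ht_fin : t.Finite)
    (ht : Algebra.adjoin R t = ⊤)
    (hmem : ∀ i, z i ∈ Algebra.adjoin R (Set.range (algebraMap A L) ∪ {(algebraMap R L c)⁻¹}))
    (hz : AlgebraicIndependent (Algebra.adjoin R ({(algebraMap R L c)⁻¹} : Set L)) z)
    (hint : ∀ a ∈ t, IsIntegral (Algebra.adjoin
      (Algebra.adjoin R ({(algebraMap R L c)⁻¹} : Set L)) (Set.range z)) (algebraMap A L a)) :
    NNConclusion R A L c z := by
  obtain ⟨k, g, hg⟩ := exists_fin_span_eq_adjoin (ht_fin.image (algebraMap A L))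
    (by rwa [Set.forall_mem_image])
  have hgen : Algebra.adjoin R
      ({(algebraMap R L c)⁻¹} ∪ (Set.range z ∪ algebraMap A L '' t)) =
      Algebra.adjoin R (Set.range (algebraMap A L) ∪ {(algebraMap R L c)⁻¹}) := by
    apply le_antisymm <;> apply Algebra.adjoin_le
    · refine Set.union_subset ?_ (Set.union_subset (Set.range_subset_iff.mpr hmem) ?_)
      · exact Set.subset_union_right.trans Algebra.subset_adjoin
      · exact (Set.image_subset_range _ _).trans
          (Set.subset_union_left.trans Algebra.subset_adjoin)
    · refine Set.union_subset ?_ (Set.subset_union_left.trans Algebra.subset_adjoin)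
      rw [← coe_adjoin_algebraMap_image ht]
      exact Algebra.adjoin_mono (Set.subset_union_right.trans Set.subset_union_right)
  rw [hgen] at hg
  exact ⟨hmem, hz, k, g, fun j ↦ hg.subset (Submodule.subset_span ⟨j, rfl⟩), fun a ha ↦ hg.ge ha⟩

theorem IsNoetherNormalization.exists_nnConclusion [IsDomain R] [hA : Algebra.FiniteType R A]
    {F : Type*} [Field F] [Algebra R F] [IsFractionRing R F] [Algebra F L] [IsScalarTower R F L]
    (hz : IsNoetherNormalization (Algebra.adjoin F (Set.range (algebraMap A L))) z) :
    ∃ c : R, c ≠ 0 ∧ NNConclusion R A L c z := by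
  have := FaithfulSMul.trans R F L
  obtain ⟨t, ht⟩ := hA.out
  have hmem : SpreadsOut fun S : Subalgebra R L ↦
      ∀ i, Set.range (algebraMap A L) ⊆ S → z i ∈ S :=
    .forall_of_finite fun i ↦ spreadsOut_mem_of_mem_adjoin (hz.mem i)
  have hint : SpreadsOut fun S : Subalgebra R L ↦
      ∀ a : t, Set.range z ⊆ S → IsIntegral S (algebraMap A L a) :=
    .forall_of_finite fun a ↦ spreadsOut_isIntegral_of_isIntegral_adjoin
      (hz.isIntegral _ (Algebra.subset_adjoin ⟨a, rfl⟩))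
  obtain ⟨c, hc, hc'⟩ := hmem.and hint
  refine ⟨c, hc, nnConclusion_of_isIntegral t.finite_toSet ht (fun i ↦ ?_) ?_ fun a ha ↦ ?_⟩
  · exact (hc' _ (Algebra.subset_adjoin (.inr rfl))).1 i
      (Set.subset_union_left.trans Algebra.subset_adjoin)
  · refine algebraicIndependent_subalgebra_of_le_range (Algebra.adjoin_le ?_)
      hz.algebraicIndependent
    rintro _ rfl
    exact ⟨(algebraMap R F c)⁻¹, by simp [← IsScalarTower.algebraMap_apply]⟩
  · let R' := Algebra.adjoin R {(algebraMap R L c)⁻¹}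
    let S := Algebra.adjoin R' (Set.range z)
    have hcS : (algebraMap R L c)⁻¹ ∈ S.restrictScalars R :=
      S.algebraMap_mem ⟨_, Algebra.subset_adjoin rfl⟩
    exact (hc' _ hcS).2 ⟨a, ha⟩ Algebra.subset_adjoin

end NNConclusion

/-- (Noether Normalization Lemma with separating transcendence basis.)
`R ⊆ A` domains, `A` a finitely generated `R`-algebra, `F = Frac R`, `L = Frac A`,
`d = trdeg_F L`.  There are `c ∈ R`, `c ≠ 0`, and `z_1,…,z_d ∈ A[c⁻¹]` algebraically
independent over `R[c⁻¹]` with `A[c⁻¹]` a finite module over `R[c⁻¹][z]`; moreover if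
`L/F` is separable (i.e. `L ⊗_F F̄` is reduced), `z` can be chosen to be a separating
transcendence basis, i.e. with `L/F(z)` separable algebraic. -/
theorem stmt_4 (R A F L : Type) [CommRing R] [IsDomain R] [CommRing A] [IsDomain A]
    [Algebra R A] (hfg : Algebra.FiniteType R A)
    (hinj : Function.Injective (algebraMap R A))
    [Field F] [Algebra R F] [IsFractionRing R F]
    [Field L] [Algebra A L] [IsFractionRing A L]
    [Algebra R L] [IsScalarTower R A L]
    [Algebra F L] [IsScalarTower R F L]
    (d : ℕ)
    (hd : ∃ b : Set L, b.Finite ∧ Nat.card b = d ∧ IsTranscendenceBasis F ((↑) : b → L)) :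
    (∃ c : R, c ≠ 0 ∧ ∃ z : Fin d → L, NNConclusion R A L c z) ∧
    (IsReduced (TensorProduct F (AlgebraicClosure F) L) →
      ∃ c : R, c ≠ 0 ∧ ∃ z : Fin d → L, NNConclusion R A L c z ∧
        Algebra.IsSeparable ↥(IntermediateField.adjoin F (Set.range z)) L) := by
  obtain ⟨b, hb_fin, rfl, hb⟩ := hd
  have : Finite b := hb_fin
  have htrdeg : Algebra.trdeg F L = Nat.card b := by rw [← hb.cardinalMk_eq_trdeg, Nat.cast_card]
  have hB : (Algebra.adjoin F (Set.range (algebraMap A L))).FG :=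
    fg_adjoin_range_algebraMap R
  have := isFractionRing_adjoin_range_algebraMap (A := A) (F := F) (L := L)
  constructor
  · obtain ⟨z, hz⟩ := exists_isNoetherNormalization_of_trdeg_eq hB htrdeg
    obtain ⟨c, hc, hcz⟩ := hz.exists_nnConclusion (R := R)
    exact ⟨c, hc, z, hcz⟩
  · intro hred
    have := (Algebra.isGeometricallyReduced_field_iff F L).mpr hred
    obtain ⟨z, hz, hsep⟩ := exists_isNoetherNormalization_isSeparable hB htrdeg
    obtain ⟨c, hc, hcz⟩ := hz.exists_nnConclusion (R := R)
    exact ⟨c, hc, z, hcz, hsep⟩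

end
end

section
/- Let K be a field, p a prime ideal of K[Y] of height h, and Q_{S,R}(Λ,Y) a quasi-generic polynomial of base (S,R) such that the triple (p,S,R) satisfies hypothesis (H). Then the ideal generated by p and Q_{S,R} in K(Λ)[Y] is a prime ideal of height h + 1. -/
open MvPolynomial

noncomputable section

/-!
Put `B = K[Y]/p` and write `Q_{S,R} = Λ₀ + F(Λ₁, …, Λₙ, Y)`. Eliminating `Λ₀` identifies
`K[Y][Λ]/(p, Q_{S,R})` with the domain `B[Λ₁, …, Λₙ]`; hence `(p, Q_{S,R})` is prime in `K[Y][Λ]`.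
Its height is `ht p + 1` by going-down along the flat extension `K[Y] → K[Y][Λ]` and Krull's
principal ideal theorem in `B[Λ]`.

Under the elimination `K[Λ]` maps to `K[Λ₁, …, Λₙ][-F]`, so that `(p, Q_{S,R})` meets `K[Λ]` in `0`
exactly when the class of `F` in `B[Λ₁, …, Λₙ]` is transcendental over `K[Λ₁, …, Λₙ]`. For this it
is enough that one specialization `F(a, Y)`, `a ∈ Kⁿ`, is transcendental over `K` modulo `p`, which
is what hypothesis (H) provides. Inverting `K[Λ] ∖ 0` therefore preserves both primality and height.
-/

section

variable {K B σ : Type*} [CommRing K] [CommRing B]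

lemma bind₂_injective {A : Type*} [CommRing A] (ψ : A →+* MvPolynomial σ B)
    (hψ : Function.Injective (constantCoeff.comp ψ)) : Function.Injective (bind₂ ψ) := by
  classical
  refine (injective_iff_map_eq_zero _).2 fun f hf ↦ by_contra fun hf0 ↦ ?_
  obtain ⟨d, hd⟩ := f.support.exists_minimal (support_nonempty.2 hf0)
  -- By minimality no other monomial of `f` divides `d`, so none of them contributes to `coeff d`.
  have hcoeff : coeff d (bind₂ ψ f) = constantCoeff (ψ (coeff d f)) := by
    have hprod (e : σ →₀ ℕ) : ∏ i ∈ e.support, (X i : MvPolynomial σ B) ^ e i = monomial e 1 := by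
      rw [monomial_eq, C_1, one_mul, Finsupp.prod]
    simp only [bind₂, coe_eval₂Hom, eval₂_eq, hprod, coeff_sum, coeff_mul_monomial', mul_one]
    rw [Finset.sum_eq_single_of_mem d hd.prop]
    · simp [constantCoeff_eq]
    · exact fun e he hed ↦ if_neg fun hle ↦ hed (hd.eq_of_le he hle)
  exact mem_support_iff.1 hd.prop (hψ (by simp [← hcoeff, hf]))

variable [Algebra K B]

lemma aeval_X_add_C_injective (a : σ → K) :
    Function.Injective
      (aeval fun i ↦ X i + C (a i) : MvPolynomial σ K →ₐ[K] MvPolynomial σ K) := by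
  have h : (aeval fun i ↦ X i - C (a i) : MvPolynomial σ K →ₐ[K] MvPolynomial σ K).comp
      (aeval fun i ↦ X i + C (a i)) = AlgHom.id K _ := by
    ext; simp
  refine Function.Injective.of_comp
    (f := (aeval fun i ↦ X i - C (a i) : MvPolynomial σ K →ₐ[K] MvPolynomial σ K)) ?_
  rw [← AlgHom.coe_comp, h]
  exact Function.injective_id

attribute [local instance] MvPolynomial.algebraMvPolynomial

lemma transcendental_of_transcendental_constantCoeff {t : MvPolynomial σ B}
    (ht : Transcendental K (constantCoeff t)) : Transcendental (MvPolynomial σ K) t := by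
  let ψ : Polynomial K →+* MvPolynomial σ B := (Polynomial.aeval t).toRingHom
  let e : Polynomial (MvPolynomial σ K) ≃ₐ[K] MvPolynomial σ (Polynomial K) :=
    (optionEquivLeft K σ).symm.trans (optionEquivRight K σ)
  have hψ : constantCoeff.comp ψ =
      (Polynomial.aeval (constantCoeff t) : Polynomial K →ₐ[K] B).toRingHom := by
    ext <;> simp [ψ]
  have hcomp : (Polynomial.aeval (R := MvPolynomial σ K) t).toRingHom =
      (bind₂ ψ).comp e.toRingEquiv.toRingHom := by
    ext <;> simp [e, ψ]
  rw [transcendental_iff_injective] at ht ⊢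
  have hbind : Function.Injective (bind₂ ψ) := bind₂_injective ψ (by rwa [hψ])
  have hinj := hbind.comp e.injective
  rwa [show ⇑(bind₂ ψ) ∘ e = _ from congrArg DFunLike.coe hcomp.symm] at hinj

lemma transcendental_of_transcendental_eval {t : MvPolynomial σ B} (a : σ → K)
    (ht : Transcendental K (eval (fun i ↦ algebraMap K B (a i)) t)) :
    Transcendental (MvPolynomial σ K) t := by
  let shift : MvPolynomial σ B →ₐ[B] MvPolynomial σ B :=
    aeval fun i ↦ X i + C (algebraMap K B (a i))
  have hshift : constantCoeff.comp shift.toRingHom = eval fun i ↦ algebraMap K B (a i) := by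
    ext <;> simp [shift]
  rw [← hshift] at ht
  refine (transcendental_of_transcendental_constantCoeff ht).of_ringHom_of_comp_eq
    (aeval fun i ↦ X i + C (a i)).toRingHom shift.toRingHom (aeval_X_add_C_injective a) ?_
  ext <;> simp [shift]

end

section

variable {A : Type*} [CommRing A] {n : ℕ}

/-- The substitution `Λ₀ ↦ -t`, which eliminates the first variable by means of the equation
`Λ₀ + t(Λ₁, …, Λₙ) = 0`; the remaining variables are renumbered from `0`. -/
def elimZero (t : MvPolynomial (Fin n) A) :
    MvPolynomial (Fin (n + 1)) A →ₐ[A] MvPolynomial (Fin n) A :=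
  aeval (Fin.cons (-t) X)

lemma elimZero_apply (t : MvPolynomial (Fin n) A) (f : MvPolynomial (Fin (n + 1)) A) :
    elimZero t f = (finSuccEquiv A n f).eval (-t) := by
  have h : elimZero t =
      ((Polynomial.aeval (R := MvPolynomial (Fin n) A) (-t)).restrictScalars A).comp
        (finSuccEquiv A n).toAlgHom := by
    ext i
    cases i using Fin.cases <;> simp [elimZero, finSuccEquiv_X_zero, finSuccEquiv_X_succ]
  rw [h, ← Polynomial.coe_aeval_eq_eval]
  rfl

lemma finSuccEquiv_rename_succ (t : MvPolynomial (Fin n) A) :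
    finSuccEquiv A n (rename Fin.succ t) = Polynomial.C t := by
  have h : (finSuccEquiv A n).toAlgHom.comp (rename Fin.succ) = Polynomial.CAlgHom := by
    ext i
    simp [finSuccEquiv_X_succ]
  exact DFunLike.congr_fun h t

lemma finSuccEquiv_X_zero_add_rename_succ (t : MvPolynomial (Fin n) A) :
    finSuccEquiv A n (X 0 + rename Fin.succ t) = Polynomial.X + Polynomial.C t := by
  rw [map_add, finSuccEquiv_X_zero, finSuccEquiv_rename_succ]

lemma X_zero_add_rename_succ_ne_zero [Nontrivial A] (t : MvPolynomial (Fin n) A) :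
    X 0 + rename Fin.succ t ≠ 0 := by
  rw [← EmbeddingLike.map_ne_zero_iff (f := finSuccEquiv A n),
    finSuccEquiv_X_zero_add_rename_succ]
  exact Polynomial.X_add_C_ne_zero t

lemma ker_elimZero (t : MvPolynomial (Fin n) A) :
    RingHom.ker (elimZero t).toRingHom = Ideal.span {X 0 + rename Fin.succ t} := by
  ext f
  have hroot : (finSuccEquiv A n f).eval (-t) = 0 ↔
      Polynomial.X + Polynomial.C t ∣ finSuccEquiv A n f := by
    rw [← Polynomial.IsRoot.def, ← Polynomial.dvd_iff_isRoot, Polynomial.C_neg, sub_neg_eq_add]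
  rw [Ideal.mem_span_singleton, ← map_dvd_iff (finSuccEquiv A n),
    finSuccEquiv_X_zero_add_rename_succ, ← hroot, ← elimZero_apply]
  exact RingHom.mem_ker

attribute [local instance] MvPolynomial.algebraMvPolynomial

lemma elimZero_map {K : Type*} [CommRing K] [Algebra K A] (t : MvPolynomial (Fin n) A)
    (f : MvPolynomial (Fin (n + 1)) K) :
    elimZero t (map (algebraMap K A) f) = Polynomial.aeval (-t) (finSuccEquiv K n f) := by
  have h : (elimZero t).toRingHom.comp (map (algebraMap K A)) =
      (Polynomial.aeval (R := MvPolynomial (Fin n) K) (-t)).toRingHom.comp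
        (finSuccEquiv K n).toRingEquiv.toRingHom := by
    refine ringHom_ext (fun c ↦ ?_) fun i ↦ ?_
    · simp [elimZero, finSuccEquiv_apply]
    · cases i using Fin.cases <;> simp [elimZero, finSuccEquiv_X_zero, finSuccEquiv_X_succ]
  exact DFunLike.congr_fun h f

lemma elimZero_map_injective {K : Type*} [CommRing K] [Algebra K A] {t : MvPolynomial (Fin n) A}
    (ht : Transcendental (MvPolynomial (Fin n) K) t) :
    Function.Injective fun f : MvPolynomial (Fin (n + 1)) K ↦
      elimZero t (map (algebraMap K A) f) := by
  simp only [elimZero_map]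
  have ht' : Transcendental (MvPolynomial (Fin n) K) (-t) := fun h ↦ ht (by simpa using h.neg)
  exact (transcendental_iff_injective.1 ht').comp (finSuccEquiv K n).injective

end

lemma height_sup_span_singleton {R S : Type*} [CommRing R] [CommRing S] [IsNoetherianRing R]
    [IsNoetherianRing S] [Algebra R S] [Algebra.HasGoingDown R S] {p : Ideal R} [p.IsPrime] {f : S}
    (hpS : (p.map (algebraMap R S)).IsPrime) (hf : f ∉ p.map (algebraMap R S))
    [(p.map (algebraMap R S) ⊔ Ideal.span {f}).IsPrime]
    [(p.map (algebraMap R S) ⊔ Ideal.span {f}).LiesOver p] :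
    (p.map (algebraMap R S) ⊔ Ideal.span {f}).height = p.height + 1 := by
  set I := p.map (algebraMap R S)
  have himage : (I ⊔ Ideal.span {f}).map (Ideal.Quotient.mk I) =
      Ideal.span {Ideal.Quotient.mk I f} := by
    simp [Ideal.map_sup, Ideal.map_span]
  have hfI : Ideal.Quotient.mk I f ≠ 0 := by rwa [Ne, Ideal.Quotient.eq_zero_iff_mem]
  have hprime : (Ideal.span {Ideal.Quotient.mk I f}).IsPrime :=
    himage ▸ Ideal.map_isPrime_of_surjective Ideal.Quotient.mk_surjective (by simp)
  have hunit : ¬ IsUnit (Ideal.Quotient.mk I f) := Ideal.span_singleton_eq_top.not.1 hprime.ne_top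
  rw [Ideal.height_eq_height_add_of_liesOver_of_hasGoingDown p (I ⊔ Ideal.span {f}), himage,
    Ideal.height_span_singleton_eq_one_of_mem_nonZeroDivisors
      (mem_nonZeroDivisors_of_ne_zero hfI) hunit]

section

variable {A : Type*} [CommRing A] {n : ℕ}

/-- Reduction of the coefficients modulo `p` followed by the elimination of the first variable by
means of `Λ₀ + t = 0`. This presents the quotient of `A[Λ₀, …, Λₙ]` by `(p, Λ₀ + t)` as the
polynomial ring `(A/p)[Λ₁, …, Λₙ]`. -/
def elimZeroMod (p : Ideal A) (t : MvPolynomial (Fin n) A) :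
    MvPolynomial (Fin (n + 1)) A →+* MvPolynomial (Fin n) (A ⧸ p) :=
  (elimZero (map (Ideal.Quotient.mk p) t)).toRingHom.comp (map (Ideal.Quotient.mk p))

lemma elimZeroMod_comp_C (p : Ideal A) (t : MvPolynomial (Fin n) A) :
    (elimZeroMod p t).comp C = C.comp (Ideal.Quotient.mk p) := by
  ext1 a
  simp [elimZeroMod, elimZero]

lemma ker_elimZeroMod (p : Ideal A) (t : MvPolynomial (Fin n) A) :
    RingHom.ker (elimZeroMod p t) = p.map C ⊔ Ideal.span {X 0 + rename Fin.succ t} := by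
  have himage : (Ideal.span {X 0 + rename Fin.succ t}).map (map (Ideal.Quotient.mk p)) =
      Ideal.span {X 0 + rename Fin.succ (map (Ideal.Quotient.mk p) t)} := by
    simp [Ideal.map_span, map_rename]
  have hsurj : Function.Surjective (map (σ := Fin (n + 1)) (Ideal.Quotient.mk p)) :=
    map_surjective _ Ideal.Quotient.mk_surjective
  rw [elimZeroMod, ← RingHom.comap_ker, ker_elimZero, ← himage,
    Ideal.comap_map_of_surjective' _ hsurj, MvPolynomial.ker_map, Ideal.mk_ker, sup_comm]

lemma height_ker_elimZeroMod [IsNoetherianRing A] (p : Ideal A) [p.IsPrime]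
    (t : MvPolynomial (Fin n) A) :
    (RingHom.ker (elimZeroMod p t)).height = p.height + 1 := by
  have hlies : (RingHom.ker (elimZeroMod p t)).LiesOver p := by
    refine ⟨?_⟩
    rw [Ideal.under_def, algebraMap_eq, RingHom.comap_ker, elimZeroMod_comp_C,
      RingHom.ker_comp_of_injective _ (C_injective _ _), Ideal.mk_ker]
  have hprime := RingHom.ker_isPrime (elimZeroMod p t)
  have hkermap : p.map (algebraMap A (MvPolynomial (Fin (n + 1)) A)) =
      RingHom.ker (map (σ := Fin (n + 1)) (Ideal.Quotient.mk p)) := by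
    rw [MvPolynomial.ker_map, Ideal.mk_ker, algebraMap_eq]
  have hmem : X 0 + rename Fin.succ t ∉ p.map (algebraMap A (MvPolynomial (Fin (n + 1)) A)) := by
    rw [hkermap, RingHom.mem_ker, map_add, map_X, map_rename]
    exact X_zero_add_rename_succ_ne_zero _
  rw [ker_elimZeroMod, ← algebraMap_eq] at hlies hprime ⊢
  exact height_sup_span_singleton (hkermap ▸ RingHom.ker_isPrime _) hmem

end

section

variable {K A : Type*} [CommRing K] [CommRing A] [Algebra K A] {n : ℕ}

attribute [local instance] MvPolynomial.algebraMvPolynomial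

lemma comap_map_ker_elimZeroMod_eq_bot {p : Ideal A} {t : MvPolynomial (Fin n) A}
    (ht : Transcendental (MvPolynomial (Fin n) K) (map (Ideal.Quotient.mk p) t)) :
    (RingHom.ker (elimZeroMod p t)).comap (map (algebraMap K A)) = ⊥ := by
  rw [RingHom.comap_ker, ← RingHom.injective_iff_ker_eq_bot]
  have hcomp : (elimZeroMod p t).comp (map (algebraMap K A)) =
      (elimZero (map (Ideal.Quotient.mk p) t)).toRingHom.comp (map (algebraMap K (A ⧸ p))) := by
    ext <;> simp [elimZeroMod]
  rw [hcomp]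
  exact elimZero_map_injective ht

end

section

variable {K σ τ : Type*} [CommRing K]

lemma commAlgEquiv_map_C (f : MvPolynomial τ K) : commAlgEquiv K τ σ (map C f) = C f := by
  have h : (commAlgEquiv K τ σ).toRingEquiv.toRingHom.comp (map C) =
      (C : MvPolynomial τ K →+* MvPolynomial σ (MvPolynomial τ K)) := by
    ext <;> simp
  exact DFunLike.congr_fun h f

lemma commAlgEquiv_rename {τ' : Type*} (g : τ → τ') (f : MvPolynomial τ (MvPolynomial σ K)) :
    commAlgEquiv K τ' σ (rename g f) = map (rename g).toRingHom (commAlgEquiv K τ σ f) := by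
  have h : (commAlgEquiv K τ' σ).toRingEquiv.toRingHom.comp (rename g).toRingHom =
      (map (rename g).toRingHom).comp (commAlgEquiv K τ σ).toRingEquiv.toRingHom := by
    ext <;> simp
  exact DFunLike.congr_fun h f

lemma map_eval_commAlgEquiv (a : τ → K) (f : MvPolynomial τ (MvPolynomial σ K)) :
    map (eval a) (commAlgEquiv K τ σ f) = eval (fun i ↦ C (a i)) f := by
  have h : (map (eval a)).comp (commAlgEquiv K τ σ).toRingEquiv.toRingHom =
      eval (fun i ↦ C (a i)) := by
    ext <;> simp
  exact DFunLike.congr_fun h f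

end

section

variable {R L σ : Type*} [CommRing R] [CommRing L] [Algebra R L] [IsFractionRing R L]

attribute [local instance] MvPolynomial.algebraMvPolynomial

lemma isPrime_and_height_map_of_comap_C_eq_bot (P : Ideal (MvPolynomial σ R)) [hP : P.IsPrime]
    (hbot : P.comap C = ⊥) :
    (P.map (map (algebraMap R L))).IsPrime ∧ (P.map (map (algebraMap R L))).height = P.height := by
  let M : Submonoid (MvPolynomial σ R) := (nonZeroDivisors R).map C
  have hloc : IsLocalization M (MvPolynomial σ L) := MvPolynomial.isLocalization _ _
  have hnontriv : Nontrivial R := by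
    have : Nontrivial (MvPolynomial σ R) := nontrivial_of_ne 0 1 fun h ↦
      hP.ne_top ((Ideal.eq_top_iff_one P).2 (h ▸ P.zero_mem))
    exact (C : R →+* MvPolynomial σ R).domain_nontrivial
  have hdisj : Disjoint (M : Set (MvPolynomial σ R)) (P : Set (MvPolynomial σ R)) := by
    rw [Set.disjoint_left]
    rintro _ ⟨c, hc, rfl⟩ hcP
    have hc0 : c ∈ P.comap C := hcP
    rw [hbot] at hc0
    exact nonZeroDivisors.ne_zero hc hc0
  exact ⟨IsLocalization.isPrime_of_isPrime_disjoint M (MvPolynomial σ L) P hP hdisj,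
    IsLocalization.height_map_of_disjoint M P hdisj⟩

end

section

variable {K σ τ : Type*} [CommRing K] {n : ℕ}

lemma map_map_C_commAlgEquiv (p : Ideal (MvPolynomial σ K)) :
    (p.map (C : MvPolynomial σ K →+* MvPolynomial τ (MvPolynomial σ K))).map
      (commAlgEquiv K τ σ).toRingEquiv = p.map (map C) := by
  have hC : ((commAlgEquiv K τ σ).toRingEquiv : _ →+* MvPolynomial σ (MvPolynomial τ K)).comp
      (C : MvPolynomial σ K →+* MvPolynomial τ (MvPolynomial σ K)) = map C :=
    RingHom.ext fun f ↦ commAlgEquiv_C f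
  rw [← hC, ← Ideal.map_map, Ideal.map_coe]

lemma map_commAlgEquiv_ker_elimZeroMod (p : Ideal (MvPolynomial σ K))
    (t : MvPolynomial (Fin n) (MvPolynomial σ K)) :
    (RingHom.ker (elimZeroMod p t)).map (commAlgEquiv K (Fin (n + 1)) σ).toRingEquiv =
      p.map (map C) ⊔
        Ideal.span {C (X 0) + map (rename Fin.succ).toRingHom (commAlgEquiv K (Fin n) σ t)} := by
  have hgen : (commAlgEquiv K (Fin (n + 1)) σ).toRingEquiv (X 0 + rename Fin.succ t) =
      C (X 0) + map (rename Fin.succ).toRingHom (commAlgEquiv K (Fin n) σ t) := by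
    change commAlgEquiv K (Fin (n + 1)) σ (X 0 + rename Fin.succ t) = _
    rw [map_add, commAlgEquiv_X, commAlgEquiv_rename]
  rw [ker_elimZeroMod, Ideal.map_sup, map_map_C_commAlgEquiv, Ideal.map_span, Set.image_singleton,
    hgen]

lemma comap_C_map_commAlgEquiv (I : Ideal (MvPolynomial τ (MvPolynomial σ K))) :
    (I.map (commAlgEquiv K τ σ).toRingEquiv).comap C = I.comap (map C) := by
  ext f
  rw [Ideal.mem_comap, Ideal.mem_comap, ← commAlgEquiv_map_C]
  exact Ideal.apply_mem_of_equiv_iff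

lemma comap_map_C_ker_elimZeroMod {p : Ideal (MvPolynomial σ K)}
    {t : MvPolynomial (Fin n) (MvPolynomial σ K)} (a : Fin n → K)
    (ha : Transcendental K (Ideal.Quotient.mk p (eval (fun i ↦ C (a i)) t))) :
    (RingHom.ker (elimZeroMod p t)).comap (map C) = ⊥ := by
  refine comap_map_ker_elimZeroMod_eq_bot (transcendental_of_transcendental_eval a ?_)
  rw [eval₂_comp] at ha
  rwa [eval_map]

end

lemma idealHeight_eq_height {A : Type} [CommRing A] (I : Ideal A) [hI : I.IsPrime] :
    idealHeight I = I.height := by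
  rw [show I.height = Order.height (⟨I, hI⟩ : PrimeSpectrum A) from
    PrimeSpectrum.height_eq_orderHeight ⟨I, hI⟩]
  exact le_antisymm (iInf_le_of_le ⟨⟨I, hI⟩, le_rfl⟩ le_rfl)
    (le_iInf fun q ↦ Order.height_mono q.2)

section

variable {K : Type} [Field K] {s n : ℕ}

lemma quasiGen_eq_C_X_zero_add {m : Fin (n + 1) → (Fin s →₀ ℕ)} (hm0 : m 0 = 0)
    (R : MvPolynomial (Fin s) K) :
    quasiGen K m R = C (X 0) +
      map (rename Fin.succ).toRingHom (∑ i : Fin n, monomial (m i.succ) (X i) + map C R) := by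
  have hC : (rename Fin.succ).toRingHom.comp C = (C : K →+* MvPolynomial (Fin (n + 1)) K) := by
    ext; simp
  simp only [quasiGen, Fin.sum_univ_succ, hm0, monomial_zero', map_add, map_sum, map_monomial,
    AlgHom.toRingHom_eq_coe, RingHom.coe_coe, rename_X, add_assoc]
  rw [← AlgHom.toRingHom_eq_coe, map_map, hC]

lemma HypothesisH.exists_transcendental {p : Ideal (MvPolynomial (Fin s) K)}
    {m : Fin (n + 1) → (Fin s →₀ ℕ)} {R : MvPolynomial (Fin s) K} (h : HypothesisH K p m R) :
    ∃ a : Fin n → K, Transcendental K (Ideal.Quotient.mk p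
      (map (eval a) (∑ i : Fin n, monomial (m i.succ) (X i) + map C R))) := by
  obtain ⟨a, ha⟩ := h
  refine ⟨fun i ↦ a i.succ, fun halg ↦ ha ?_⟩
  have hsum : ∑ i ∈ Finset.univ.erase 0, monomial (m i) (a i) =
      ∑ i : Fin n, monomial (m i.succ) (a i.succ) := by
    simp [Fin.univ_succ]
  have heval : map (eval fun i ↦ a i.succ) (∑ i : Fin n, monomial (m i.succ) (X i) + map C R) =
      (∑ i ∈ Finset.univ.erase 0, monomial (m i) (a i)) + R := by
    have hC : (eval fun i : Fin n ↦ a i.succ).comp C = RingHom.id K := by ext; simp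
    simp [hsum, map_map, hC, map_id]
  rwa [heval, isAlgebraic_iff_isIntegral] at halg

end

theorem stmt_5_general {K σ : Type*} [CommRing K] [IsNoetherianRing K] [Finite σ] {n : ℕ}
    (L : Type*) [CommRing L]
    [Algebra (MvPolynomial (Fin (n + 1)) K) L] [IsFractionRing (MvPolynomial (Fin (n + 1)) K) L]
    (p : Ideal (MvPolynomial σ K)) [p.IsPrime] (F : MvPolynomial σ (MvPolynomial (Fin n) K))
    (a : Fin n → K) (ha : Transcendental K (Ideal.Quotient.mk p (map (eval a) F))) :
    let P : Ideal (MvPolynomial σ L) :=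
      p.map (map ((algebraMap (MvPolynomial (Fin (n + 1)) K) L).comp C)) ⊔
        Ideal.span {map (algebraMap (MvPolynomial (Fin (n + 1)) K) L)
          (C (X 0) + map (rename Fin.succ).toRingHom F)}
    P.IsPrime ∧ P.height = p.height + 1 := by
  intro P
  obtain ⟨t, rfl⟩ := (commAlgEquiv K (Fin n) σ).surjective F
  rw [map_eval_commAlgEquiv] at ha
  let e := (commAlgEquiv K (Fin (n + 1)) σ).toRingEquiv
  have hker : (RingHom.ker (elimZeroMod p t)).IsPrime := RingHom.ker_isPrime _
  have hprime : ((RingHom.ker (elimZeroMod p t)).map e).IsPrime := Ideal.map_isPrime_of_equiv e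
  have hcomp : (map (algebraMap (MvPolynomial (Fin (n + 1)) K) L)).comp (map C) =
      map (σ := σ) ((algebraMap (MvPolynomial (Fin (n + 1)) K) L).comp C) :=
    RingHom.ext fun x ↦ map_map _ _ x
  have hP : P = ((RingHom.ker (elimZeroMod p t)).map e).map
      (map (algebraMap (MvPolynomial (Fin (n + 1)) K) L)) := by
    rw [map_commAlgEquiv_ker_elimZeroMod, Ideal.map_sup, Ideal.map_map, hcomp, Ideal.map_span,
      Set.image_singleton]
  rw [hP, ← height_ker_elimZeroMod p t, ← e.height_map]
  refine isPrime_and_height_map_of_comap_C_eq_bot _ ?_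
  rw [comap_C_map_commAlgEquiv, comap_map_C_ker_elimZeroMod a ha]

/-- (Key lemma on quasi-generic polynomials.) If `p ⊆ K[Y]` is a prime
ideal of height `h` and `Q_{S,R}(Λ,Y)` is a quasi-generic polynomial of base `(S,R)` such
that `(p,S,R)` satisfies hypothesis (H), then the ideal `⟨p, Q_{S,R}⟩` of `K(Λ)[Y]` is a
prime ideal of height `h + 1`. -/
theorem stmt_5 (K : Type) [Field K] (s n D : ℕ)
    (m : Fin (n + 1) → (Fin s →₀ ℕ)) (hdeg : ∀ i, (m i).degree ≤ D)
    (hm0 : m 0 = 0) (hminj : Function.Injective m)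
    (R : MvPolynomial (Fin s) K)
    (p : Ideal (MvPolynomial (Fin s) K)) (hp : p.IsPrime)
    (h : ℕ∞) (hh : idealHeight p = h)
    (hH : HypothesisH K p m R) :
    (Ideal.map (MvPolynomial.map
        ((algebraMap (MvPolynomial (Fin (n + 1)) K) (RatFuncField K (Fin (n + 1)))).comp
          MvPolynomial.C)) p ⊔
      Ideal.span {MvPolynomial.map
        (algebraMap (MvPolynomial (Fin (n + 1)) K) (RatFuncField K (Fin (n + 1))))
        (quasiGen K m R)}).IsPrime ∧
    idealHeight
      (Ideal.map (MvPolynomial.map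
        ((algebraMap (MvPolynomial (Fin (n + 1)) K) (RatFuncField K (Fin (n + 1)))).comp
          MvPolynomial.C)) p ⊔
      Ideal.span {MvPolynomial.map
        (algebraMap (MvPolynomial (Fin (n + 1)) K) (RatFuncField K (Fin (n + 1))))
        (quasiGen K m R)}) = h + 1 := by
  obtain ⟨a, ha⟩ := hH.exists_transcendental
  have hP := stmt_5_general (RatFuncField K (Fin (n + 1))) p _ a ha
  rw [← quasiGen_eq_C_X_zero_add hm0] at hP
  obtain ⟨hprime, hheight⟩ := hP
  exact ⟨hprime, by rw [idealHeight_eq_height, hheight, ← idealHeight_eq_height p, hh]⟩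
end
end
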